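/- Let P = {P_n : n < ω} be a partition of ω into infinitely many infinite sets with min P_i < min P_j whenever i < j, and let I = (I_n)_{n<ω} be a sequence of subsets of ω with n ∈ I_n for all n. For every finite Souslin measurable colouring c of 𝓔^{P,I}_∞ and every E ∈ 𝓔^{P,I}_∞, there exists F ∈ 𝓔^{P,I}_∞ with F ≤ E such that c is constant on 𝓔^{P,I}_∞ ↾ F = {F' ∈ 𝓔^{P,I}_∞ : F' ≤ F}. -/

import Mathlib

open Set

namespace DualRamsey

/-- `F` is a coarsening of `E` (written `F ≤ E` in the paper): every class of `F`
is a union of classes of `E`. -/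
def Coarsens {X : Type*} (F E : Setoid X) : Prop := ∀ a b, E.r a b → F.r a b

/-- The set of equivalence classes of a setoid. -/
def classes {X : Type*} (E : Setoid X) : Set (Set X) := {C | ∃ x, C = {y | E.r x y}}

/-- The set of minimal representatives of the classes of an equivalence relation on ℕ. -/
def minReps (E : Setoid ℕ) : Set ℕ := {n | ∀ m, E.r n m → n ≤ m}

/-- `pRep E k` is `p_k(E)`, the k-th minimal representative in increasing order. -/
noncomputable def pRep (E : Setoid ℕ) (k : ℕ) : ℕ := Nat.nth (· ∈ minReps E) k

/-- `approx n E` is the n-th approximation `r_n(E)`: `E` restricted to `{0,…,p_n(E)-1}`,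
identified with its graph. -/
noncomputable def approx (n : ℕ) (E : Setoid ℕ) : Set (ℕ × ℕ) :=
  {q | q.1 < pRep E n ∧ q.2 < pRep E n ∧ E.r q.1 q.2}

/-- Basic set `[a, E]` relative to a space `S` of equivalence relations. -/
noncomputable def basicSet (S : Set (Setoid ℕ)) (a : Set (ℕ × ℕ)) (E : ↥S) : Set ↥S :=
  {F | Coarsens F.1 E.1 ∧ ∃ n, approx n F.1 = a}

/-- The Ellentuck topology on a space `S` of equivalence relations. -/
noncomputable def ellentuckTop (S : Set (Setoid ℕ)) : TopologicalSpace ↥S :=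
  TopologicalSpace.generateFrom {U | ∃ a E, U = basicSet S a E}

def IsRamsey (S : Set (Setoid ℕ)) (X : Set ↥S) : Prop :=
  ∀ (a : Set (ℕ × ℕ)) (B : ↥S), (basicSet S a B).Nonempty →
    ∃ A ∈ basicSet S a B, basicSet S a A ⊆ X ∨ basicSet S a A ∩ X = ∅

def IsRamseyNull (S : Set (Setoid ℕ)) (X : Set ↥S) : Prop :=
  ∀ (a : Set (ℕ × ℕ)) (B : ↥S), (basicSet S a B).Nonempty →
    ∃ A ∈ basicSet S a B, basicSet S a A ∩ X = ∅

/-- The property of Baire with respect to the Ellentuck topology. -/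
noncomputable def HasBP (S : Set (Setoid ℕ)) (X : Set ↥S) : Prop :=
  ∃ O M : Set ↥S, (ellentuckTop S).IsOpen O ∧ @IsMeagre _ (ellentuckTop S) M ∧
    X = (O \ M) ∪ (M \ O)

/-- The Souslin operation applied to a scheme indexed by finite sequences of naturals. -/
def souslinOp {X : Type*} (A : List ℕ → Set X) : Set X :=
  ⋃ x : ℕ → ℕ, ⋂ n : ℕ, A ((List.range n).map x)

/-- `Y` belongs to the smallest field of sets containing all `t`-open sets and
closed under the Souslin operation. -/
def SouslinMeasurable {X : Type*} (t : TopologicalSpace X) (Y : Set X) : Prop :=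
  ∀ 𝒜 : Set (Set X),
    (∀ U, t.IsOpen U → U ∈ 𝒜) →
    (∀ A ∈ 𝒜, Aᶜ ∈ 𝒜) →
    (∀ A ∈ 𝒜, ∀ B ∈ 𝒜, A ∪ B ∈ 𝒜) →
    (∀ f : List ℕ → Set X, (∀ s, f s ∈ 𝒜) → souslinOp f ∈ 𝒜) →
    Y ∈ 𝒜

/-- The graph of an equivalence relation as a boolean-valued function. -/
noncomputable def graphMap {X : Type*} (E : Setoid X) : X × X → Bool :=
  fun q => @decide (E.r q.1 q.2) (Classical.dec _)

/-- The metrizable topology on a space of equivalence relations, as a subspace of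
`2^(X × X)` via graphs. -/
noncomputable def graphTop {X : Type*} (S : Set (Setoid X)) : TopologicalSpace ↥S :=
  TopologicalSpace.induced (fun E => graphMap E.1) inferInstance



/-- `σ(k)`: the largest `n` such that `2^n` divides `k+1`. -/
def sigmaSeq (k : ℕ) : ℕ := padicValNat 2 (k + 1)

/-- `𝓔^P_∞` for a partition `P` of ℕ into infinitely many infinite pieces: the
`P`-alternating equivalence relations, i.e. those with infinitely many classes whose
`k`-th minimal representative lies in `P (σ k)`. -/
noncomputable def EPaltInf (P : ℕ → Set ℕ) : Set (Setoid ℕ) :=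
  {E | (classes E).Infinite ∧ ∀ k : ℕ, pRep E k ∈ P (sigmaSeq k)}

/-- `𝓔^{P,I}_∞`: the `P`-alternating equivalence relations such that moreover every
class whose minimum lies in `P n` is contained in `⋃ {P m : m ∈ I n}`. -/
noncomputable def EPaltI (P : ℕ → Set ℕ) (I : ℕ → Set ℕ) : Set (Setoid ℕ) :=
  {E | E ∈ EPaltInf P ∧
    ∀ x ∈ minReps E, ∀ n, x ∈ P n → ∀ y, E.r x y → ∃ m ∈ I n, y ∈ P m}

section PartA
/-- Dependent recursion along `ℕ` with an invariant. -/
theorem dep_seq {St : Type*} (Inv : ℕ → St → Prop) (Rel : ℕ → St → St → Prop) (s0 : St)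
    (h0 : Inv 0 s0) (hs : ∀ j s, Inv j s → ∃ s', Inv (j + 1) s' ∧ Rel j s s') :
    ∃ f : ℕ → St, f 0 = s0 ∧ (∀ j, Inv j (f j)) ∧ ∀ j, Rel j (f j) (f (j + 1)) := by
  classical
  choose! nx h1 h2 using hs
  let f : ℕ → St := fun n => Nat.rec s0 (fun j s => nx j s) n
  have hI : ∀ j, Inv j (f j) := by
    intro j
    induction j with
    | zero => exact h0
    | succ j ih => exact h1 j (f j) ih
  exact ⟨f, rfl, hI, fun j => h2 j (f j) (hI j)⟩

attribute [local instance] Ultrafilter.mul Ultrafilter.semigroup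

/-- Partial words with letters in `L` and one variable (`some none`). -/
def Wd (L : Type) := ℕ → Option (Option L)

def Wd.mul' {L : Type} (a b : Wd L) : Wd L := fun z => (a z).or (b z)

instance (L : Type) : Semigroup (Wd L) where
  mul a b := Wd.mul' a b
  mul_assoc a b c := by
    funext z
    exact Option.or_assoc

theorem Wd.mul_apply {L : Type} (a b : Wd L) (z : ℕ) :
    (a * b) z = (a z).or (b z) := rfl

def WV (L : Type) (s : Set ℕ) (n : ℕ) : Set (Wd L) :=
  {w | (∃ N, ∀ z, N ≤ z → w z = none) ∧ (∀ z, z < n → w z = none) ∧ ∀ z, w z = some none → z ∈ s}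

def FV (L : Type) : Set (Wd L) := {w | ∃ k, w k = some none ∧ ∀ z, z < k → w z = none}

def Wd.sub {L : Type} (a : L) (w : Wd L) : Wd L := fun z => (w z).map (fun o => some (o.getD a))

theorem Wd.sub_mul {L : Type} (a : L) (v w : Wd L) : Wd.sub a (v * w) = Wd.sub a v * Wd.sub a w := by
  funext z
  simp only [Wd.sub, Wd.mul_apply]
  cases v z <;> simp

theorem WV_mul {L : Type} {s : Set ℕ} {n : ℕ} {v w : Wd L} (hv : v ∈ WV L s n) (hw : w ∈ WV L s n) :
    v * w ∈ WV L s n := by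
  obtain ⟨⟨N, hN⟩, h2, h3⟩ := hv
  obtain ⟨⟨N', hN'⟩, h2', h3'⟩ := hw
  refine ⟨⟨max N N', fun z hz => ?_⟩, fun z hz => ?_, fun z hz => ?_⟩
  · simp [Wd.mul_apply, hN z (le_trans (le_max_left _ _) hz), hN' z (le_trans (le_max_right _ _) hz)]
  · simp [Wd.mul_apply, h2 z hz, h2' z hz]
  · rw [Wd.mul_apply] at hz
    cases h : v z with
    | none => rw [h] at hz; exact h3' z (by simpa using hz)
    | some o => rw [h] at hz; exact h3 z (by rw [h]; simpa using hz)

theorem WV_mono {L : Type} {s s' : Set ℕ} {n n' : ℕ} (hs : s ⊆ s') (hn : n' ≤ n) :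
    WV L s n ⊆ WV L s' n' := by
  rintro w ⟨h1, h2, h3⟩
  exact ⟨h1, fun z hz => h2 z (by omega), fun z hz => hs (h3 z hz)⟩

theorem WV_sub {L : Type} {s : Set ℕ} {n : ℕ} (a : L) {v : Wd L} (hv : v ∈ WV L s n) :
    Wd.sub a v ∈ WV L ∅ n := by
  obtain ⟨⟨N, hN⟩, h2, h3⟩ := hv
  refine ⟨⟨N, fun z hz => ?_⟩, fun z hz => ?_, fun z hz => ?_⟩
  · simp [Wd.sub, hN z hz]
  · simp [Wd.sub, h2 z hz]
  · simp only [Wd.sub] at hz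
    cases h : v z <;> simp [h] at hz

theorem WV_sub_eq {L : Type} {n : ℕ} (a : L) {v : Wd L} (hv : v ∈ WV L ∅ n) :
    Wd.sub a v = v := by
  funext z
  simp only [Wd.sub]
  cases h : v z with
  | none => rfl
  | some o =>
    cases o with
    | none => exact absurd (hv.2.2 z h) (by simp)
    | some b => rfl

def Gam (L : Type) (s : Set ℕ) : Set (Ultrafilter (Wd L)) := {V | ∀ n, WV L s n ∈ V}

def Lam (L : Type) (s : Set ℕ) : Set (Ultrafilter (Wd L)) := {V | V ∈ Gam L s ∧ FV L ∈ V}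

theorem uf_mul_mem {M : Type*} [Semigroup M] (U V : Ultrafilter M) (s : Set M) :
    s ∈ U * V ↔ ∀ᶠ a in U, ∀ᶠ b in V, a * b ∈ s := Iff.rfl

theorem isClosed_Gam (L : Type) (s : Set ℕ) : IsClosed (Gam L s) := by
  have : Gam L s = ⋂ n, {V : Ultrafilter (Wd L) | WV L s n ∈ V} := by
    ext V; simp [Gam]
  rw [this]
  exact isClosed_iInter fun n => ultrafilter_isClosed_basic _

theorem isClosed_Lam (L : Type) (s : Set ℕ) : IsClosed (Lam L s) :=
  (isClosed_Gam L s).inter (ultrafilter_isClosed_basic (FV L))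

theorem Gam_mul {L : Type} {s : Set ℕ} {V W : Ultrafilter (Wd L)} (hV : V ∈ Gam L s)
    (hW : W ∈ Gam L s) : V * W ∈ Gam L s := by
  intro n
  rw [uf_mul_mem]
  filter_upwards [hV n] with v hv
  filter_upwards [hW n] with w hw
  exact WV_mul hv hw

theorem Gam_mono {L : Type} {s s' : Set ℕ} (h : s ⊆ s') : Gam L s ⊆ Gam L s' := by
  intro V hV n
  exact Filter.mem_of_superset (hV n) (WV_mono h le_rfl)

theorem Lam_mul {L : Type} {s : Set ℕ} {V W : Ultrafilter (Wd L)} (hV : V ∈ Lam L s)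
    (hW : W ∈ Gam L s) : V * W ∈ Lam L s := by
  refine ⟨Gam_mul hV.1 hW, ?_⟩
  rw [uf_mul_mem]
  filter_upwards [hV.2] with v hv
  obtain ⟨k, hk, hk'⟩ := hv
  filter_upwards [hW (k + 1)] with w hw
  refine ⟨k, by simp [Wd.mul_apply, hk], fun z hz => ?_⟩
  simp [Wd.mul_apply, hk' z hz, hw.2.1 z (by omega)]

theorem Gam_map {L : Type} {s : Set ℕ} (a : L) {V : Ultrafilter (Wd L)} (hV : V ∈ Gam L s) :
    V.map (Wd.sub a) ∈ Gam L ∅ := by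
  intro n
  rw [Ultrafilter.mem_map]
  filter_upwards [hV n] with v hv using WV_sub a hv

theorem uf_map_mul {M : Type*} [Semigroup M] (f : M → M) (hf : ∀ a b, f (a * b) = f a * f b)
    (U V : Ultrafilter M) : (U * V).map f = U.map f * V.map f := by
  ext s
  rw [Ultrafilter.mem_map, uf_mul_mem, uf_mul_mem]
  show _ ↔ ∀ᶠ a in Filter.map f U, ∀ᶠ b in Filter.map f V, a * b ∈ s
  simp only [Filter.eventually_map, mem_preimage, hf]

theorem Gam_map_eq {L : Type} (a : L) {V : Ultrafilter (Wd L)} (hV : V ∈ Gam L ∅) :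
    V.map (Wd.sub a) = V := by
  apply Ultrafilter.coe_injective
  rw [Ultrafilter.coe_map]
  have : (Wd.sub a) =ᶠ[(V : Filter (Wd L))] id := by
    filter_upwards [hV 0] with v hv using WV_sub_eq a hv
  rw [Filter.map_congr this, Filter.map_id]

theorem isClosed_map_pre {M : Type*} (f : M → M) (K : Set (Ultrafilter M)) (hK : IsClosed K) :
    IsClosed {V : Ultrafilter M | V.map f ∈ K} := by
  have : Continuous (fun V : Ultrafilter M => V.map f) := by
    rw [ultrafilterBasis_is_basis.continuous_iff]
    rintro _ ⟨s, rfl⟩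
    exact ultrafilter_isOpen_basic (f ⁻¹' s)
  exact hK.preimage this

theorem Lam_nonempty (L : Type) (s : Set ℕ) (hs : s.Infinite) : (Lam L s).Nonempty := by
  classical
  let f : ℕ → Wd L := fun x z => if z = x then some none else none
  have : (Filter.map f (Filter.atTop ⊓ Filter.principal s)).NeBot := by
    apply Filter.NeBot.map
    rw [Filter.inf_principal_neBot_iff]
    intro U hU
    obtain ⟨N, hN⟩ := Filter.mem_atTop_sets.1 hU
    obtain ⟨x, hx, hx'⟩ := hs.exists_gt N
    exact ⟨x, hN x (by omega), hx⟩
  obtain ⟨V, hV⟩ := Ultrafilter.exists_le (Filter.map f (Filter.atTop ⊓ Filter.principal s))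
  refine ⟨V, fun n => hV ?_, hV ?_⟩
  · rw [Filter.mem_map, Filter.mem_inf_principal]
    filter_upwards [Filter.eventually_ge_atTop n] with x hx hxs
    refine ⟨⟨x + 1, fun z hz => ?_⟩, fun z hz => ?_, fun z hz => ?_⟩
    · simp only [f]; rw [if_neg]; omega
    · simp only [f]; rw [if_neg]; omega
    · simp only [f] at hz
      split_ifs at hz with h
      rw [h]; exact hxs
  · rw [Filter.mem_map]
    refine Filter.mem_of_superset Filter.univ_mem ?_
    intro x _
    refine ⟨x, by simp [f], fun z hz => ?_⟩
    simp only [f]; rw [if_neg]; omega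

/-- Existence of a minimal closed left ideal. -/
theorem exists_min_ideal {M : Type*} [Semigroup M] [TopologicalSpace M] [CompactSpace M] [T2Space M]
    (hc : ∀ r : M, Continuous (· * r)) (G : Set M) (hG : IsClosed G) (hne : G.Nonempty)
    (hmul : ∀ a ∈ G, ∀ b ∈ G, a * b ∈ G) :
    ∃ K : Set M, K ⊆ G ∧ IsClosed K ∧ K.Nonempty ∧ (∀ a ∈ G, ∀ b ∈ K, a * b ∈ K) ∧
      ∀ e ∈ K, e * e = e → ∀ x ∈ K, x * e = x := by
  let S : Set (Set M) := {K | K ⊆ G ∧ IsClosed K ∧ K.Nonempty ∧ ∀ a ∈ G, ∀ b ∈ K, a * b ∈ K}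
  obtain ⟨K, hK⟩ : ∃ K, Minimal (· ∈ S) K := by
    refine zorn_superset _ ?_
    intro c hcs hch
    obtain rfl | hcne := c.eq_empty_or_nonempty
    · exact ⟨G, ⟨Subset.rfl, hG, hne, hmul⟩, by simp⟩
    refine ⟨⋂₀ c, ⟨?_, ?_, ?_, ?_⟩, fun s hs => sInter_subset_of_mem hs⟩
    · obtain ⟨t, ht⟩ := hcne
      exact (sInter_subset_of_mem ht).trans (hcs ht).1
    · exact isClosed_sInter fun t ht => (hcs ht).2.1
    · haveI := hcne.to_subtype
      exact IsCompact.nonempty_sInter_of_directed_nonempty_isCompact_isClosed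
        (IsChain.directedOn hch.symm) (fun t ht => (hcs ht).2.2.1)
        (fun t ht => (hcs ht).2.1.isCompact) (fun t ht => (hcs ht).2.1)
    · intro a ha b hb t ht
      exact (hcs ht).2.2.2 a ha b (hb t ht)
  obtain ⟨⟨h1, h2, h3, h4⟩, hmin⟩ := hK
  refine ⟨K, h1, h2, h3, h4, fun e he hee x hx => ?_⟩
  have hsub : (· * e) '' K ⊆ K := by
    rintro _ ⟨y, hy, rfl⟩
    exact h4 y (h1 hy) e he
  have hin : (· * e) '' K ∈ S := by
    refine ⟨hsub.trans h1, (h2.isCompact.image (hc e)).isClosed, h3.image _, ?_⟩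
    rintro a ha _ ⟨y, hy, rfl⟩
    exact ⟨a * y, h4 a ha y hy, mul_assoc _ _ _⟩
  obtain ⟨y, hy, rfl⟩ := hmin hin hsub hx
  show y * e * e = y * e
  rw [mul_assoc, hee]

/-- The system of idempotents. -/
theorem exists_idem_system (L : Type) [Nonempty L] (S : ℕ → Set ℕ) (hS : ∀ i, (S i).Infinite) :
    ∃ (U : Ultrafilter (Wd L)) (V : ℕ → Ultrafilter (Wd L)), U ∈ Gam L ∅ ∧
      (∀ i, V i ∈ Lam L (S i)) ∧ (∀ i a, U * (V i).map (Wd.sub a) = U) ∧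
      ∀ i a i' a', (V i).map (Wd.sub a) * (V i').map (Wd.sub a') = (V i).map (Wd.sub a) := by
  have hGne : (Gam L ∅).Nonempty := by
    obtain ⟨V, hV⟩ := Lam_nonempty L (S 0) (hS 0)
    exact ⟨_, Gam_map (Classical.arbitrary L) hV.1⟩
  obtain ⟨K, hKG, hKc, hKne, hKm, hKid⟩ := exists_min_ideal
    (fun r : Ultrafilter (Wd L) => Ultrafilter.continuous_mul_left r) (Gam L ∅) (isClosed_Gam L ∅)
    hGne (fun a ha b hb => Gam_mul ha hb)
  obtain ⟨U, hU⟩ := hKne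
  have hV : ∀ i, ∃ V ∈ {V | V ∈ Lam L (S i) ∧ ∀ a : L, V.map (Wd.sub a) ∈ K}, V * V = V := by
    intro i
    apply exists_idempotent_in_compact_subsemigroup Ultrafilter.continuous_mul_left
    · obtain ⟨V0, hV0⟩ := Lam_nonempty L (S i) (hS i)
      refine ⟨V0 * U, Lam_mul hV0 (Gam_mono (by simp) (hKG hU)), fun a => ?_⟩
      rw [uf_map_mul _ (Wd.sub_mul a), Gam_map_eq a (hKG hU)]
      exact hKm _ (Gam_map a hV0.1) _ hU
    · apply IsClosed.isCompact
      have : {V | V ∈ Lam L (S i) ∧ ∀ a : L, V.map (Wd.sub a) ∈ K} =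
          Lam L (S i) ∩ ⋂ a : L, {V | V.map (Wd.sub a) ∈ K} := by
        ext V; simp
      rw [this]
      exact (isClosed_Lam L (S i)).inter (isClosed_iInter fun a => isClosed_map_pre _ _ hKc)
    · rintro x ⟨hx, hx'⟩ y ⟨hy, hy'⟩
      refine ⟨Lam_mul hx hy.1, fun a => ?_⟩
      rw [uf_map_mul _ (Wd.sub_mul a)]
      exact hKm _ (Gam_map a hx.1) _ (hy' a)
  choose V hV hVV using hV
  have he : ∀ i a, (V i).map (Wd.sub a) * (V i).map (Wd.sub a) = (V i).map (Wd.sub a) := by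
    intro i a
    rw [← uf_map_mul _ (Wd.sub_mul a), hVV]
  exact ⟨U, V, hKG hU, fun i => (hV i).1, fun i a => hKid _ ((hV i).2 a) (he i a) _ hU,
    fun i a i' a' => hKid _ ((hV i').2 a') (he i' a') _ ((hV i).2 a)⟩

end PartA

section PartB
attribute [local instance] Ultrafilter.mul Ultrafilter.semigroup

noncomputable def Wd.fill {L : Type} [Nonempty L] (w : Wd L) : ℕ → L :=
  fun z => ((w z).bind id).getD (Classical.arbitrary L)

noncomputable def Wd.fst {L : Type} (w : Wd L) : ℕ := sInf {z | w z ≠ none}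

theorem Wd.fst_eq {L : Type} {w : Wd L} {k : ℕ} (h : w k = some none) (h' : ∀ z, z < k → w z = none) :
    w.fst = k := by
  apply le_antisymm
  · exact Nat.sInf_le (by simp [h])
  · apply le_csInf ⟨k, by simp [h]⟩
    intro z hz
    by_contra hlt
    exact hz (h' z (by omega))

/-- Substitute letters for the indexed variables. -/
def subst {L : Type} (φ : ℕ → L) (g : ℕ → Option (L ⊕ ℕ)) : Wd L :=
  fun z => (g z).map (fun o => some (Sum.elim id φ o))

theorem finite_subst {L : Type} [Finite L] [Nonempty L] (g : ℕ → Option (L ⊕ ℕ)) (j : ℕ)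
    (hg : ∀ z i, g z = some (Sum.inr i) → i < j) :
    (range (fun φ : ℕ → L => subst φ g)).Finite := by
  classical
  have : range (fun φ : ℕ → L => subst φ g) ⊆
      range (fun ψ : Fin j → L => subst (fun i => if h : i < j then ψ ⟨i, h⟩ else
        Classical.arbitrary L) g) := by
    rintro _ ⟨φ, rfl⟩
    refine ⟨fun i => φ i, ?_⟩
    funext z
    simp only [subst]
    cases h : g z with
    | none => rfl
    | some o =>
      cases o with
      | inl a => rfl
      | inr i => simp [hg z i h]
  exact (finite_range _).subset this

/-- Typed Carlson–Simpson theorem. -/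
theorem tcs {L : Type} [Finite L] [Nonempty L] (S : ℕ → Set ℕ) (hS : ∀ i, (S i).Infinite)
    (τ : ℕ → ℕ) (t : ℕ) (C : (ℕ → L) → ℕ → Prop)
    (hC : ∀ w w' l, (∀ z, z < l → w z = w' z) → (C w l ↔ C w' l)) :
    ∃ (g : ℕ → L ⊕ ℕ) (k : ℕ → ℕ) (ε : Prop), StrictMono k ∧ (∀ j, g (k j) = Sum.inr j) ∧
      (∀ z j, g z = Sum.inr j → k j ≤ z ∧ z ∈ S (τ j)) ∧
      ∀ j (φ : ℕ → L), τ j = t → (C (fun z => Sum.elim id φ (g z)) (k j) ↔ ε) := by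
  classical
  obtain ⟨U, V, hU, hV, hUe, hee⟩ := exists_idem_system L S hS
  let Cs : Wd L → Prop := fun w => ∀ᶠ v : Wd L in V t, C (Wd.fill w) (Wd.fst v)
  let ε : Prop := ∀ᶠ w in U, Cs w
  let A : Set (Wd L) := {w | Cs w ↔ ε}
  have hA : A ∈ U := by
    by_cases h : ε
    · filter_upwards [h] with w hw using ⟨fun _ => h, fun _ => hw⟩
    · have h' : ∀ᶠ w in U, ¬ Cs w := Ultrafilter.eventually_not.2 h
      filter_upwards [h'] with w hw using ⟨fun h1 => absurd h1 hw, fun h1 => absurd h1 h⟩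
  let e : ℕ → L → Ultrafilter (Wd L) := fun i a => (V i).map (Wd.sub a)
  let D : ℕ → Wd L → Prop := fun j w => w ∈ A ∧ ∀ a, ∀ᶠ u in e (τ j) a, w * u ∈ A
  -- one-step extension of a single word
  have step : ∀ j w, D j w → ∀ᶠ v in V (τ j), (∀ a, D (j + 1) (w * Wd.sub a v)) ∧
      (τ j = t → (C w.fill (Wd.fst v) ↔ ε)) := by
    intro j w hw
    rw [Filter.eventually_and]
    constructor
    · rw [Filter.eventually_all]
      intro a
      have h1 : ∀ᶠ v in V (τ j), w * Wd.sub a v ∈ A := hw.2 a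
      have h2 : ∀ b, ∀ᶠ v in V (τ j), ∀ᶠ u in e (τ (j + 1)) b, w * (Wd.sub a v) * u ∈ A := by
        intro b
        have h3 := hw.2 a
        have h4 : {u | w * u ∈ A} ∈ e (τ j) a * e (τ (j + 1)) b := by
          rw [show e (τ j) a * e (τ (j + 1)) b = e (τ j) a from hee _ _ _ _]
          exact h3
        rw [uf_mul_mem] at h4
        have h5 : ∀ᶠ v in V (τ j), ∀ᶠ u in e (τ (j + 1)) b, (Wd.sub a v) * u ∈ {u | w * u ∈ A} := h4
        filter_upwards [h5] with v hv
        filter_upwards [hv] with u hu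
        rw [mul_assoc]; exact hu
      filter_upwards [h1, Filter.eventually_all.2 h2] with v hv1 hv2 using ⟨hv1, hv2⟩
    · rw [Filter.eventually_imp_distrib_left]
      intro htj
      rw [htj]
      have hw1 : Cs w ↔ ε := hw.1
      by_cases h : ε
      · filter_upwards [hw1.2 h] with v hv using ⟨fun _ => h, fun _ => hv⟩
      · have h' : ∀ᶠ v : Wd L in V t, ¬ C w.fill (Wd.fst v) :=
          Ultrafilter.eventually_not.2 (fun h2 => h (hw1.1 h2))
        filter_upwards [h'] with v hv using ⟨fun h1 => absurd h1 hv, fun h1 => absurd h1 h⟩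
  -- start
  obtain ⟨w0, hw0D, hw0⟩ : ∃ w0, D 0 w0 ∧ w0 ∈ WV L ∅ 0 := by
    have h1 : ∀ a, ∀ᶠ w in U, ∀ᶠ u in e (τ 0) a, w * u ∈ A := by
      intro a
      have : A ∈ U * e (τ 0) a := by rw [show U * e (τ 0) a = U from hUe _ _]; exact hA
      exact this
    have h2 : ∀ᶠ w in U, (w ∈ A ∧ ∀ a, ∀ᶠ u in e (τ 0) a, w * u ∈ A) ∧ w ∈ WV L ∅ 0 := by
      filter_upwards [hA, Filter.eventually_all.2 h1, hU 0] with w a b c using ⟨⟨a, b⟩, c⟩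
    exact h2.exists
  let Inv : ℕ → (ℕ → Option (L ⊕ ℕ)) × ℕ → Prop := fun j s =>
    (∀ z, s.2 ≤ z → s.1 z = none) ∧ (∀ φ, D j (subst φ s.1)) ∧
      ∀ z i, s.1 z = some (Sum.inr i) → i < j
  let Rel : ℕ → (ℕ → Option (L ⊕ ℕ)) × ℕ → (ℕ → Option (L ⊕ ℕ)) × ℕ → Prop := fun j s s' =>
    s.2 < s'.2 ∧ (∀ z, z < s.2 → s'.1 z = s.1 z) ∧ ∃ k, s.2 ≤ k ∧ k < s'.2 ∧
      (∀ z, s.2 ≤ z → z < k → s'.1 z = none) ∧ s'.1 k = some (Sum.inr j) ∧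
      (∀ z i, s.2 ≤ z → s'.1 z = some (Sum.inr i) → i = j ∧ k ≤ z ∧ z ∈ S (τ j)) ∧
      (τ j = t → ∀ φ, (C (subst φ s.1).fill k ↔ ε))
  obtain ⟨N0, hN0⟩ := hw0.1
  let g0 : ℕ → Option (L ⊕ ℕ) := fun z => (w0 z).bind (fun o => o.map Sum.inl)
  have hg0 : ∀ φ : ℕ → L, subst φ g0 = w0 := by
    intro φ
    funext z
    simp only [subst, g0]
    cases h : w0 z with
    | none => rfl
    | some o =>
      cases o with
      | none => exact absurd (hw0.2.2 z h) (by simp)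
      | some b => rfl
  obtain ⟨f, hf0, hfI, hfR⟩ := dep_seq Inv Rel (g0, N0) (by
    refine ⟨fun z hz => ?_, fun φ => ?_, fun z i hz => ?_⟩
    · simp [g0, hN0 z hz]
    · show D 0 (subst φ g0)
      rw [hg0]; exact hw0D
    · simp only [g0] at hz
      cases h : w0 z with
      | none => simp [h] at hz
      | some o => cases o <;> simp [h] at hz) (by
    rintro j ⟨g, N⟩ ⟨hb, hD, hv⟩
    replace hb : ∀ z, N ≤ z → g z = none := hb
    have hfin := finite_subst g j hv
    have h1 : ∀ᶠ v in V (τ j), ∀ w ∈ range (fun φ : ℕ → L => subst φ g),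
        (∀ a, D (j + 1) (w * Wd.sub a v)) ∧ (τ j = t → (C w.fill (Wd.fst v) ↔ ε)) := by
      rw [Filter.eventually_all_finite hfin]
      rintro _ ⟨φ, rfl⟩
      exact step j _ (hD φ)
    have h2 : ∀ᶠ v in V (τ j), v ∈ WV L (S (τ j)) N := (hV (τ j)).1 N
    have h3 : ∀ᶠ v in V (τ j), v ∈ FV L := (hV (τ j)).2
    obtain ⟨v, hv1, hv2, hv3⟩ := (h1.and (h2.and h3)).exists
    obtain ⟨k, hk, hk'⟩ := hv3
    obtain ⟨⟨N1, hN1⟩, hvN, hvS⟩ := hv2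
    have hkN : N ≤ k := by
      by_contra hlt
      rw [hvN k (by omega)] at hk
      exact absurd hk (by simp)
    have hkN1 : k < N1 := by
      by_contra hlt
      rw [hN1 k (by omega)] at hk
      exact absurd hk (by simp)
    let g' : ℕ → Option (L ⊕ ℕ) := fun z => (g z).or ((v z).map (fun o => o.elim (Sum.inr j) Sum.inl))
    have hlow : ∀ z, z < N → g' z = g z := by
      intro z hz
      simp [g', hvN z hz]
    have hhigh : ∀ z, N ≤ z → g' z = (v z).map (fun o => o.elim (Sum.inr j) Sum.inl) := by
      intro z hz
      simp only [g']
      rw [hb z hz]; rfl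
    refine ⟨(g', N1), ⟨fun z hz => ?_, fun φ => ?_, fun z i hz => ?_⟩, ?_, hlow, k, hkN, hkN1, ?_, ?_, ?_, ?_⟩
    · show g' z = none
      rw [hhigh z (by simp only at hz; omega), hN1 z hz]; rfl
    · have : subst φ g' = subst φ g * Wd.sub (φ j) v := by
        funext z
        simp only [subst, g', Wd.mul_apply, Wd.sub]
        cases g z with
        | some o => rfl
        | none =>
          cases v z with
          | none => rfl
          | some o => cases o <;> rfl
      show D (j + 1) (subst φ g')
      rw [this]
      exact (hv1 _ ⟨φ, rfl⟩).1 _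
    · rcases lt_or_ge z N with h | h
      · have := hlow z h
        simp only at hz
        rw [this] at hz
        have := hv z i hz
        omega
      · simp only at hz
        rw [hhigh z h] at hz
        cases h3 : v z with
        | none => simp [h3] at hz
        | some o => 
          cases o with
          | none => simp [h3] at hz; omega
          | some b => simp [h3] at hz
    · show N < N1
      omega
    · intro z hz hzk
      show g' z = none
      rw [hhigh z hz, hk' z hzk]; rfl
    · show g' k = _
      rw [hhigh k hkN, hk]; rfl
    · intro z i hz hzi
      simp only at hzi hz
      rw [hhigh z hz] at hzi
      cases h3 : v z with
      | none => simp [h3] at hzi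
      | some o => 
        cases o with
        | none =>
          simp [h3] at hzi
          refine ⟨hzi.symm, ?_, hvS z h3⟩
          by_contra hlt
          rw [hk' z (by omega)] at h3
          exact absurd h3 (by simp)
        | some b => simp [h3] at hzi
    · intro htj φ
      have := (hv1 _ ⟨φ, rfl⟩).2 htj
      rw [Wd.fst_eq hk hk'] at this
      exact this)
  -- assemble
  choose hR1 hR2 k hR3 hR4 hR5 hR6 hR7 hR8 using hfR
  have hNmono : StrictMono (fun j => (f j).2) := strictMono_nat_of_lt_succ hR1
  have hstab : ∀ j i z, z < (f j).2 → j ≤ i → (f i).1 z = (f j).1 z := by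
    intro j i z hz hji
    induction i, hji using Nat.le_induction with
    | base => rfl
    | succ i hi ih =>
      rw [hR2 i z (lt_of_lt_of_le hz (hNmono.monotone hi)), ih]
  have hNz : ∀ z, z < (f (z + 1)).2 := fun z => 
    lt_of_lt_of_le (Nat.lt_succ_self z) (hNmono.le_apply)
  have hfz : ∀ j z, z < (f j).2 → (f (z + 1)).1 z = (f j).1 z := by
    intro j z hz
    rcases le_total j (z + 1) with h | h
    · exact hstab j _ z hz h
    · exact (hstab (z + 1) j z (hNz z) h).symm
  let G : ℕ → L ⊕ ℕ := fun z => ((f (z + 1)).1 z).getD (Sum.inl (Classical.arbitrary L))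
  have hkmono : StrictMono k := by
    apply strictMono_nat_of_lt_succ
    intro j
    exact lt_of_lt_of_le (hR4 j) (hR3 (j + 1))
  refine ⟨G, k, ε, hkmono, fun j => ?_, fun z j hz => ?_, fun j φ hj => ?_⟩
  · simp only [G]
    rw [hfz (j + 1) (k j) (hR4 j), hR6 j]; rfl
  · have hz1 : (f (z + 1)).1 z = some (Sum.inr j) := by
      simp only [G] at hz
      cases h : (f (z + 1)).1 z with
      | none => simp [h] at hz
      | some o => simp [h] at hz; rw [hz]
    -- z is not below (f j).2 
    have h1 : (f j).2 ≤ z := by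
      by_contra hlt
      have := hfz j z (by omega)
      rw [this] at hz1
      exact absurd ((hfI j).2.2 z j hz1) (by omega)
    -- find the stage
    have h2 : ∃ i, z < (f i).2 := ⟨z + 1, hNz z⟩
    have h3 := Nat.find_spec h2
    have h4 : j < Nat.find h2 := by
      by_contra hle
      have h7 : (f (Nat.find h2)).2 ≤ (f j).2 := hNmono.monotone (not_lt.1 hle)
      omega
    obtain ⟨i, hi⟩ : ∃ i, Nat.find h2 = i + 1 := ⟨Nat.find h2 - 1, by omega⟩
    have h5 : (f i).2 ≤ z := not_lt.1 (Nat.find_min h2 (by omega))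
    rw [hi] at h3
    have h6 := hfz (i + 1) z h3
    rw [hz1] at h6
    obtain ⟨rfl, h7⟩ := hR7 i z j h5 h6.symm
    exact h7
  · rw [← hR8 j hj φ]
    apply hC
    intro z hz
    simp only [G, Wd.fill, subst]
    rcases lt_or_ge z (f j).2 with h | h
    · rw [hfz j z h]
      cases (f j).1 z with
      | none => rfl
      | some o => rfl
    · rw [hfz (j + 1) z (lt_trans hz (hR4 j)), hR5 j z h hz, (hfI j).1 z h]
      rfl

end PartB

section PartC
/-- Number of fixed points below `x`. -/
def cnt (e : ℕ → ℕ) (x : ℕ) : ℕ := Nat.count (fun y => e y = y) x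

/-- The `k`-th fixed point. -/
noncomputable def nfx (e : ℕ → ℕ) (k : ℕ) : ℕ := Nat.nth (fun y => e y = y) k

/-- Representative functions of members of the space. -/
structure Sp (ty : ℕ → ℕ) (I : ℕ → Set ℕ) (e : ℕ → ℕ) : Prop where
  le : ∀ x, e x ≤ x
  idem : ∀ x, e (e x) = e x
  al : ∀ x, ty x ∈ I (ty (e x))
  inf : ∀ N, ∃ x, N ≤ x ∧ e x = x
  sig : ∀ x, e x = x → ty x = sigmaSeq (cnt e x)

/-- Coarsening for representative functions. -/
def Le (e' e : ℕ → ℕ) : Prop := ∀ x, e' (e x) = e' x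

/-- The class of `x` is allowed to be absorbed in a class with minimum of type `t`. -/
def Al (ty : ℕ → ℕ) (I : ℕ → Set ℕ) (F : ℕ → ℕ) (t x : ℕ) : Prop := ∀ z, F z = x → ty z ∈ I t

def Nb (ty : ℕ → ℕ) (I : ℕ → Set ℕ) (h : ℕ → ℕ) (p : ℕ) (E : ℕ → ℕ) : Set (ℕ → ℕ) :=
  {F | Sp ty I F ∧ Le F E ∧ (∀ x, x < p → F x = h x) ∧ F p = p}

def B (ty : ℕ → ℕ) (I : ℕ → Set ℕ) (p : ℕ) (E : ℕ → ℕ) : Set (ℕ → ℕ) := Nb ty I E p E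

variable {ty : ℕ → ℕ} {I : ℕ → Set ℕ}

theorem Le.trans {a b c : ℕ → ℕ} (h1 : Le a b) (h2 : Le b c) : Le a c := by
  intro x
  rw [← h1 (c x), h2 x, h1 x]

theorem Sp.le_refl {e : ℕ → ℕ} (h : Sp ty I e) : Le e e := h.idem

theorem Le.fix {a b : ℕ → ℕ} (hab : Le a b) (ha : Sp ty I a) (hb : Sp ty I b) {x : ℕ}
    (hx : a x = x) : b x = x := by
  have h1 := hab x
  have h2 := ha.le (b x)
  have h3 := hb.le x
  omega

theorem Sp.al_self {e : ℕ → ℕ} (h : Sp ty I e) (x : ℕ) : Al ty I e (ty x) x := by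
  intro z hz
  rw [← hz]; exact h.al z

theorem Le.al {a b : ℕ → ℕ} (hab : Le a b) {x t : ℕ} (hx : a x = x) (h : Al ty I a t x) :
    Al ty I b t x := by
  intro z hz
  apply h
  rw [← hab z, hz, hx]

theorem Le.al' {a b : ℕ → ℕ} (hab : Le a b) {z t : ℕ} (h : Al ty I a t (a z)) :
    Al ty I b t z := by
  intro y hy
  apply h
  rw [← hab y, hy]

theorem Sp.set_inf {e : ℕ → ℕ} (h : Sp ty I e) : (Set.ofPred (fun y => e y = y)).Infinite := by
  rw [Set.infinite_iff_exists_gt]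
  intro a
  obtain ⟨x, hx, hx'⟩ := h.inf (a + 1)
  exact ⟨x, hx', by omega⟩

theorem Sp.nfx_fix {e : ℕ → ℕ} (h : Sp ty I e) (k : ℕ) : e (nfx e k) = nfx e k :=
  Nat.nth_mem_of_infinite h.set_inf k

theorem Sp.cnt_nfx {e : ℕ → ℕ} (h : Sp ty I e) (k : ℕ) : cnt e (nfx e k) = k :=
  Nat.count_nth_of_infinite h.set_inf k

theorem Sp.nfx_mono {e : ℕ → ℕ} (h : Sp ty I e) : StrictMono (nfx e) :=
  Nat.nth_strictMono h.set_inf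

theorem nfx_cnt {e : ℕ → ℕ} {x : ℕ} (hx : e x = x) : nfx e (cnt e x) = x :=
  Nat.nth_count hx

theorem cnt_mono (e : ℕ → ℕ) : Monotone (cnt e) := Nat.count_monotone _

theorem cnt_lt {e : ℕ → ℕ} {x y : ℕ} (hx : e x = x) (h : x < y) : cnt e x < cnt e y :=
  Nat.count_strict_mono hx h

theorem cnt_succ_fix {e : ℕ → ℕ} {x : ℕ} (hx : e x = x) : cnt e (x + 1) = cnt e x + 1 := by
  simp [cnt, Nat.count_succ, hx]

theorem cnt_congr {e e' : ℕ → ℕ} {x : ℕ} (h : ∀ y, y < x → (e y = y ↔ e' y = y)) :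
    cnt e x = cnt e' x := by
  induction x with
  | zero => simp [cnt]
  | succ x ih =>
    have h1 := ih (fun y hy => h y (by omega))
    have h2 := h x (by omega)
    simp only [cnt] at h1 ⊢
    rw [Nat.count_succ, Nat.count_succ, h1]
    simp only [h2]

theorem cnt_gap {e : ℕ → ℕ} {a b : ℕ} (hab : a ≤ b) (h : ∀ y, a ≤ y → y < b → e y ≠ y) :
    cnt e b = cnt e a := by
  induction b, hab using Nat.le_induction with
  | base => rfl
  | succ b hb ih =>
    have h1 := ih (fun y hy hy' => h y hy (by omega))
    have h2 := h b hb (by omega)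
    simp only [cnt] at h1 ⊢
    rw [Nat.count_succ, h1]
    simp [h2]

theorem cnt_le (e : ℕ → ℕ) (x : ℕ) : cnt e x ≤ x := Nat.count_le _

theorem Sp.zero {e : ℕ → ℕ} (h : Sp ty I e) : e 0 = 0 := by
  have := h.le 0
  omega

theorem cnt_sub {e e' : ℕ → ℕ} (h : ∀ y, e' y = y → e y = y) (x : ℕ) : cnt e' x ≤ cnt e x :=
  Nat.count_mono_left (fun y _ hy => h y hy)

theorem sigma_form (t m : ℕ) : sigmaSeq (2 ^ t * (2 * m + 1) - 1) = t := by
  have hpos : 0 < 2 ^ t * (2 * m + 1) := by positivity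
  rw [sigmaSeq, Nat.sub_add_cancel hpos]
  rw [padicValNat.mul (by positivity) (by positivity), padicValNat.prime_pow,
    padicValNat.eq_zero_of_not_dvd (by omega)]
  simp

theorem sigma_pow (t : ℕ) : sigmaSeq (2 ^ t - 1) = t := by
  have := sigma_form t 0
  simpa using this

theorem sigma_exists (k : ℕ) : ∃ m, k + 1 = 2 ^ sigmaSeq k * (2 * m + 1) := by
  have h1 : 2 ^ sigmaSeq k ∣ k + 1 := pow_padicValNat_dvd
  obtain ⟨r, hr⟩ := h1
  have h2 : ¬ 2 ^ (sigmaSeq k + 1) ∣ k + 1 := pow_succ_padicValNat_not_dvd (by omega)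
  rcases Nat.even_or_odd' r with ⟨m, hm | hm⟩
  · exfalso
    apply h2
    refine ⟨m, ?_⟩
    rw [pow_succ]
    rw [hm] at hr
    linarith
  · exact ⟨m, by rw [hm] at hr; exact hr⟩

theorem sigma_unique {k t m : ℕ} (h : k + 1 = 2 ^ t * (2 * m + 1)) : sigmaSeq k = t := by
  have : k = 2 ^ t * (2 * m + 1) - 1 := by omega
  rw [this, sigma_form]

theorem sigma_pow_le (k : ℕ) : 2 ^ sigmaSeq k ≤ k + 1 := by
  obtain ⟨m, hm⟩ := sigma_exists k
  rw [hm]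
  exact Nat.le_mul_of_pos_right _ (by omega)

theorem Sp.exists_type {e : ℕ → ℕ} (h : Sp ty I e) (t N : ℕ) : ∃ x, N ≤ x ∧ e x = x ∧ ty x = t := by
  refine ⟨nfx e (2 ^ t * (2 * N + 1) - 1), ?_, h.nfx_fix _, ?_⟩
  · have h1 : 2 ^ t * (2 * N + 1) - 1 ≤ nfx e (2 ^ t * (2 * N + 1) - 1) := h.nfx_mono.le_apply
    have h2 : 0 < 2 ^ t := by positivity
    have h3 : 2 * N + 1 ≤ 2 ^ t * (2 * N + 1) := Nat.le_mul_of_pos_left _ h2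
    omega
  · rw [h.sig _ (h.nfx_fix _), h.cnt_nfx, sigma_form]

theorem sel (A : Set ℕ) (hA : ∀ t N, ∃ x, N ≤ x ∧ x ∈ A ∧ ty x = t) (p n : ℕ) (hp : p ∈ A)
    (hpn : ty p = sigmaSeq n) :
    ∃ κ : ℕ → ℕ, StrictMono κ ∧ κ 0 = p ∧ (∀ j, κ j ∈ A) ∧ ∀ j, ty (κ j) = sigmaSeq (n + j) := by
  obtain ⟨f, h0, h1, h2⟩ := dep_seq (fun j x => x ∈ A ∧ ty x = sigmaSeq (n + j))
    (fun _ x y => x < y) p ⟨hp, hpn⟩ (by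
      intro j x _
      obtain ⟨y, hy, hy1, hy2⟩ := hA (sigmaSeq (n + (j + 1))) (x + 1)
      exact ⟨y, ⟨hy1, hy2⟩, hy⟩)
  exact ⟨f, strictMono_nat_of_lt_succ h2, h0, fun j => (h1 j).1, fun j => (h1 j).2⟩

def mkE (E : ℕ → ℕ) (p0 : ℕ) (φ : ℕ → ℕ) : ℕ → ℕ := fun x => if E x < p0 then E x else φ (E x)

/-- The constructor. -/
theorem mkE_spec {E : ℕ → ℕ} (hE : Sp ty I E) {p0 : ℕ} {κ φ : ℕ → ℕ} (hκ : StrictMono κ)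
    (hp0 : p0 ≤ κ 0) (hκE : ∀ j, E (κ j) = κ j) (hty : ∀ j, ty (κ j) = sigmaSeq (cnt E p0 + j))
    (hφκ : ∀ j, φ (κ j) = κ j)
    (hφ : ∀ z, p0 ≤ z → E z = z → φ z ≤ z ∧ (φ z < p0 ∧ E (φ z) = φ z ∨ ∃ j, φ z = κ j) ∧
      Al ty I E (ty (φ z)) z) :
    Sp ty I (mkE E p0 φ) ∧ Le (mkE E p0 φ) E ∧ (∀ x, x < p0 → mkE E p0 φ x = E x) ∧
      ∀ y, mkE E p0 φ y = y ↔ (y < p0 ∧ E y = y) ∨ ∃ j, y = κ j := by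
  have hκp : ∀ j, p0 ≤ κ j := fun j => hp0.trans (hκ.monotone (Nat.zero_le j))
  have hle : ∀ x, mkE E p0 φ x ≤ x := by
    intro x
    have := hE.le x
    unfold mkE
    split_ifs with h
    · exact this
    · exact (hφ (E x) (by omega) (hE.idem x)).1.trans this
  have hlow : ∀ x, x < p0 → mkE E p0 φ x = E x := by
    intro x hx
    have := hE.le x
    unfold mkE
    rw [if_pos (by omega)]
  have hκfix : ∀ j, mkE E p0 φ (κ j) = κ j := by
    intro j
    unfold mkE
    rw [hκE, if_neg (by have := hκp j; omega), hφκ]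
  have hval : ∀ x, (mkE E p0 φ x < p0 ∧ E (mkE E p0 φ x) = mkE E p0 φ x) ∨
      ∃ j, mkE E p0 φ x = κ j := by
    intro x
    by_cases h : E x < p0
    · left
      have : mkE E p0 φ x = E x := by unfold mkE; rw [if_pos h]
      rw [this]
      exact ⟨h, hE.idem x⟩
    · have : mkE E p0 φ x = φ (E x) := by unfold mkE; rw [if_neg h]
      rw [this]
      exact (hφ (E x) (by omega) (hE.idem x)).2.1
  have hfix : ∀ y, mkE E p0 φ y = y ↔ (y < p0 ∧ E y = y) ∨ ∃ j, y = κ j := by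
    intro y
    constructor
    · intro h
      have := hval y
      rwa [h] at this
    · rintro (⟨h1, h2⟩ | ⟨j, rfl⟩)
      · rw [hlow y h1, h2]
      · exact hκfix j
  have hLe : Le (mkE E p0 φ) E := by
    intro x
    unfold mkE
    rw [hE.idem]
  have hcnt0 : ∀ y, y ≤ p0 → cnt (mkE E p0 φ) y = cnt E y := by
    intro y hy
    apply cnt_congr
    intro z hz
    rw [hlow z (by omega)]
  have hcnt : ∀ j, cnt (mkE E p0 φ) (κ j) = cnt E p0 + j := by
    intro j
    induction j with
    | zero =>
      rw [cnt_gap hp0, hcnt0 p0 le_rfl, Nat.add_zero]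
      intro y hy hy' hf
      rcases (hfix y).1 hf with h | ⟨j, rfl⟩
      · omega
      · have := hκ.monotone (Nat.zero_le j)
        omega
    | succ j ih =>
      rw [cnt_gap (a := κ j + 1) (hκ (Nat.lt_succ_self j)), cnt_succ_fix (hκfix j), ih]
      · rfl
      · intro y hy hy' hf
        rcases (hfix y).1 hf with h | ⟨i, rfl⟩
        · have := hκp j
          omega
        · have h1 : j < i := hκ.lt_iff_lt.1 (by omega)
          have h2 : i < j + 1 := hκ.lt_iff_lt.1 hy'
          omega
  refine ⟨⟨hle, ?_, ?_, ?_, ?_⟩, hLe, hlow, hfix⟩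
  · intro x
    rw [hfix]
    exact hval x
  · intro x
    unfold mkE
    split_ifs with h
    · exact hE.al x
    · exact (hφ (E x) (by omega) (hE.idem x)).2.2 x rfl
  · intro N
    exact ⟨κ N, hκ.le_apply, hκfix N⟩
  · intro y hy
    rcases (hfix y).1 hy with ⟨h1, h2⟩ | ⟨j, rfl⟩
    · rw [hcnt0 y h1.le]
      exact hE.sig y h2
    · rw [hcnt, hty]

/-- Fusion. -/
theorem fusion {E : ℕ → ℕ → ℕ} {p : ℕ → ℕ} (hE : ∀ j, Sp ty I (E j)) (hp : StrictMono p)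
    (hL : ∀ j, Le (E (j + 1)) (E j)) (hag : ∀ j x, x < p j → E (j + 1) x = E j x)
    (hfx : ∀ j, E (j + 1) (p j) = p j) :
    ∃ F, ∀ j, F ∈ B ty I (p j) (E j) := by
  have hLi : ∀ j i, j ≤ i → Le (E i) (E j) := by
    intro j i hji
    induction i, hji using Nat.le_induction with
    | base => exact (hE j).le_refl
    | succ i hi ih => exact (hL i).trans ih
  have hagi : ∀ j i x, j ≤ i → x < p j → E i x = E j x := by
    intro j i x hji hx
    induction i, hji using Nat.le_induction with
    | base => rfl
    | succ i hi ih => rw [hag i x (lt_of_lt_of_le hx (hp.monotone hi)), ih]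
  have hpx : ∀ x, x < p (x + 1) := fun x => lt_of_lt_of_le (Nat.lt_succ_self x) hp.le_apply
  let F : ℕ → ℕ := fun x => E (x + 1) x
  have hF : ∀ j x, x < p j → F x = E j x := by
    intro j x hx
    rcases le_total j (x + 1) with h | h
    · exact hagi _ _ x h hx
    · exact (hagi _ _ x h (hpx x)).symm
  have hFle : ∀ x, F x ≤ x := fun x => (hE _).le x
  have hFp : ∀ j, F (p j) = p j := by
    intro j
    rw [hF (j + 1) (p j) (hp (Nat.lt_succ_self j)), hfx]
  have hSp : Sp ty I F := by
    refine ⟨hFle, fun x => ?_, fun x => (hE _).al x, fun N => ⟨p N, hp.le_apply, hFp N⟩, fun x hx => ?_⟩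
    · have h1 := hFle x
      rw [hF (x + 1) (F x) (lt_of_le_of_lt h1 (hpx x)), hF (x + 1) x (hpx x)]
      exact (hE _).idem x
    · have h1 : E (x + 1) x = x := hx
      rw [(hE _).sig x h1]
      congr 1
      apply cnt_congr
      intro y hy
      rw [hF (x + 1) y (hy.trans (hpx x))]
  refine ⟨F, fun j => ⟨hSp, fun x => ?_, hF j, hFp j⟩⟩
  have h1 := (hE j).le x
  have h2 : p (x + 1) ≤ p (max j (x + 1)) := hp.monotone (le_max_right _ _)
  have h3 := hpx x
  rw [hF (max j (x + 1)) (E j x) (by omega), hF (max j (x + 1)) x (by omega)]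
  exact hLi _ _ (le_max_left _ _) x

end PartC

section PartD
variable {ty : ℕ → ℕ} {I : ℕ → Set ℕ}

/-- The base situation. -/
structure Base (ty : ℕ → ℕ) (I : ℕ → Set ℕ) (E0 : ℕ → ℕ) (q : ℕ) : Prop where
  sp : Sp ty I E0
  H : ∀ F, Sp ty I F → Le F E0 → ∀ x, F x = x → ∃ y, y ≤ q ∧ F y = y ∧ Al ty I F (ty y) x

/-- Good pairs. -/
structure Good (ty : ℕ → ℕ) (I : ℕ → Set ℕ) (E0 : ℕ → ℕ) (q : ℕ) (E : ℕ → ℕ) (p : ℕ) : Prop where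
  sp : Sp ty I E
  le : Le E E0
  qp : q ≤ p
  fx : E p = p

theorem Sp.mem_B {E : ℕ → ℕ} (h : Sp ty I E) {p : ℕ} (hp : E p = p) : E ∈ B ty I p E :=
  ⟨h, h.le_refl, fun _ _ => rfl, hp⟩

theorem B_sub {p p' : ℕ} {E F : ℕ → ℕ} (hF : F ∈ B ty I p E) (hpp : p ≤ p') :
    B ty I p' F ⊆ B ty I p E := by
  rintro G ⟨h1, h2, h3, h4⟩
  refine ⟨h1, h2.trans hF.2.1, fun x hx => ?_, ?_⟩
  · rw [h3 x (by omega), hF.2.2.1 x hx]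
  · rcases hpp.eq_or_lt with rfl | h
    · exact h4
    · rw [h3 p h, hF.2.2.2]

theorem Nb_sub {p : ℕ} {h E F : ℕ → ℕ} (hF : Le F E) : Nb ty I h p F ⊆ Nb ty I h p E := by
  rintro G ⟨h1, h2, h3, h4⟩
  exact ⟨h1, h2.trans hF, h3, h4⟩

theorem Nb_congr {p : ℕ} {h h' E : ℕ → ℕ} (hh : ∀ x, x < p → h x = h' x) :
    Nb ty I h p E = Nb ty I h' p E := by
  ext G
  constructor
  · rintro ⟨h1, h2, h3, h4⟩
    exact ⟨h1, h2, fun x hx => (h3 x hx).trans (hh x hx), h4⟩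
  · rintro ⟨h1, h2, h3, h4⟩
    exact ⟨h1, h2, fun x hx => (h3 x hx).trans (hh x hx).symm, h4⟩

theorem mem_Nb_self {E F : ℕ → ℕ} (h : Sp ty I F) (hL : Le F E) {p : ℕ} (hp : F p = p) :
    F ∈ Nb ty I F p E := ⟨h, hL, fun _ _ => rfl, hp⟩

theorem Good.of_B {E0 E F : ℕ → ℕ} {q p p' : ℕ} (hE : Good ty I E0 q E p) (hF : F ∈ B ty I p E)
    (hp : p ≤ p') (hfx : F p' = p') : Good ty I E0 q F p' :=
  ⟨hF.1, hF.2.1.trans hE.le, hE.qp.trans hp, hfx⟩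

theorem Good.of_B' {E0 E F : ℕ → ℕ} {q p : ℕ} (hE : Good ty I E0 q E p) (hF : F ∈ B ty I p E) :
    Good ty I E0 q F p := hE.of_B hF le_rfl hF.2.2.2

/-- Amalgamation (A3). -/
theorem amalg {E0 : ℕ → ℕ} {q : ℕ} (hb : Base ty I E0 q) {E : ℕ → ℕ} {p : ℕ}
    (hE : Good ty I E0 q E p) {h G : ℕ → ℕ} (hG : G ∈ Nb ty I h p E) :
    ∃ E' ∈ B ty I p E, Nb ty I h p E' ⊆ Nb ty I h p G := by
  classical
  obtain ⟨hGS, hGE, hGh, hGp⟩ := hG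
  obtain ⟨κ, hκ, hκ0, hκG, hκty⟩ := sel (ty := ty) {x | G x = x} (fun t N => hGS.exists_type t N) p
    (cnt E p) hGp (hE.sp.sig p hE.fx)
  have hH := hb.H G hGS (hGE.trans hE.le)
  choose! y hyq hyG hyA using hH
  let ψ : ℕ → ℕ := fun g => if g < p ∨ g ∈ range κ then g else y g
  let φ : ℕ → ℕ := fun z => ψ (G z)
  have hκE : ∀ j, E (κ j) = κ j := fun j => hGE.fix hGS hE.sp (hκG j)
  obtain ⟨h1, h2, h3, h4⟩ := mkE_spec (φ := φ) (p0 := p) hE.sp hκ hκ0.ge hκE hκty (by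
    intro j
    have : G (κ j) = κ j := hκG j
    simp [φ, ψ, this]) (by
    intro z hpz hz
    have hidem := hGS.idem z
    have hzle := hGS.le z
    by_cases hc : G z < p ∨ G z ∈ range κ
    · have hφz : φ z = G z := by simp only [φ, ψ]; rw [if_pos hc]
      rw [hφz]
      refine ⟨hzle, ?_, hGE.al' (hGS.al_self _)⟩
      rcases hc with hc | ⟨j, hj⟩
      · exact Or.inl ⟨hc, hGE.fix hGS hE.sp hidem⟩
      · exact Or.inr ⟨j, hj.symm⟩
    · have hφz : φ z = y (G z) := by simp only [φ, ψ]; rw [if_neg hc]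
      rw [hφz]
      have h5 := hyq (G z) hidem
      have h6 := hE.qp
      refine ⟨by omega, ?_, hGE.al' (hyA (G z) hidem)⟩
      rcases (h5.trans h6).eq_or_lt with h7 | h7
      · exact Or.inr ⟨0, by rw [h7, hκ0]⟩
      · exact Or.inl ⟨h7, hGE.fix hGS hE.sp (hyG (G z) hidem)⟩)
  set E' := mkE E p φ with hE'
  refine ⟨E', ⟨h1, h2, h3, (h4 p).2 (Or.inr ⟨0, hκ0.symm⟩)⟩, ?_⟩
  rintro F ⟨hF1, hF2, hF3, hF4⟩
  refine ⟨hF1, ?_, hF3, hF4⟩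
  have hFE : Le F E := hF2.trans h2
  -- it is enough to treat fixed points of `E`
  have key : ∀ z, E z = z → F (G z) = F z := by
    intro z hz
    have hzle := hGS.le z
    have hidem := hGS.idem z
    rcases lt_or_ge z p with hzp | hzp
    · rw [hF3 (G z) (by omega), hF3 z hzp, ← hGh z hzp, ← hGh (G z) (by omega), hidem]
    · have hEz : E' z = ψ (G z) := by
        simp only [hE', mkE, φ]
        rw [hz, if_neg (by omega)]
      by_cases hc : G z < p ∨ G z ∈ range κ
      · have : E' z = G z := by rw [hEz]; simp only [ψ]; rw [if_pos hc]
        rw [← this, hF2 z]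
      · have hgp : p ≤ G z := by
          by_contra hlt
          exact hc (Or.inl (by omega))
        have hEg : E (G z) = G z := hGE.fix hGS hE.sp hidem
        have hEGz : E' (G z) = ψ (G z) := by
          simp only [hE', mkE, φ]
          rw [hEg, if_neg (by omega), hidem]
        rw [← hF2 (G z), hEGz, ← hEz, hF2 z]
  intro x
  rw [← hFE x, ← key (E x) (hE.sp.idem x), hGE x]

/-- Next fixed point. -/
noncomputable def nx (e : ℕ → ℕ) (p : ℕ) : ℕ := sInf {x | p < x ∧ e x = x}

theorem Sp.nx_mem {e : ℕ → ℕ} (h : Sp ty I e) (p : ℕ) : p < nx e p ∧ e (nx e p) = nx e p := by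
  have : nx e p ∈ {x | p < x ∧ e x = x} := by
    apply Nat.sInf_mem
    obtain ⟨x, hx, hx'⟩ := h.inf (p + 1)
    exact ⟨x, hx, hx'⟩
  exact this

theorem nx_le {e : ℕ → ℕ} {p x : ℕ} (h : p < x) (hx : e x = x) : nx e p ≤ x :=
  Nat.sInf_le ⟨h, hx⟩

theorem nx_eq {e : ℕ → ℕ} {p x : ℕ} (h : p < x) (hx : e x = x) (hg : ∀ y, p < y → y < x → e y ≠ y) :
    nx e p = x := by
  apply le_antisymm (nx_le h hx)
  refine le_csInf (s := {x | p < x ∧ e x = x}) ⟨x, h, hx⟩ ?_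
  rintro y ⟨hy1, hy2⟩
  by_contra hlt
  exact hg y hy1 (by omega) hy2

theorem Sp.cnt_nx {e : ℕ → ℕ} (h : Sp ty I e) {p : ℕ} (hp : e p = p) : cnt e (nx e p) = cnt e p + 1 := by
  have := h.nx_mem p
  rw [cnt_gap (a := p + 1) (by omega), cnt_succ_fix hp]
  intro y hy hy' hf
  have := nx_le (show p < y by omega) hf
  omega

/-- One stage of the general fusion. -/
theorem gf_step {E0 : ℕ → ℕ} {q : ℕ} (hb : Base ty I E0 q) (Q : ℕ → ℕ → Set (ℕ → ℕ) → Prop)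
    (hmono : ∀ i p Y Y', Y' ⊆ Y → Q i p Y → Q i p Y')
    (hdense : ∀ i E p, Good ty I E0 q E p → ∃ G ∈ B ty I p E, Q i p (B ty I p G))
    {E : ℕ → ℕ} {p : ℕ} (hE : Good ty I E0 q E p) (N : ℕ) :
    ∃ E' ∈ B ty I p E, ∀ i, i ≤ N → ∀ h, Q i p (Nb ty I h p E') := by
  classical
  let ext : (Fin p → Fin p) → ℕ → ℕ := fun f x => if hx : x < p then f ⟨x, hx⟩ else 0
  have hempty : ∀ i, Q i p ∅ := by
    intro i
    obtain ⟨G, _, hG⟩ := hdense i E p hE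
    exact hmono i p _ _ (empty_subset _) hG
  have main : ∀ s : Finset (Fin (N + 1) × (Fin p → Fin p)), ∃ E' ∈ B ty I p E, ∀ a ∈ s,
      Q a.1 p (Nb ty I (ext a.2) p E') := by
    intro s
    induction s using Finset.induction_on with
    | empty => exact ⟨E, hE.sp.mem_B hE.fx, by simp⟩
    | insert a s _ ih =>
      obtain ⟨E1, hE1, hE1s⟩ := ih
      have hE1g := hE.of_B' hE1
      by_cases hne : (Nb ty I (ext a.2) p E1).Nonempty
      · obtain ⟨G0, hG0⟩ := hne
        obtain ⟨G, hG, hGQ⟩ := hdense a.1 G0 p ⟨hG0.1, hG0.2.1.trans hE1g.le, hE.qp, hG0.2.2.2⟩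
        have hGx : ∀ x, x < p → G x = ext a.2 x := fun x hx => by
          rw [hG.2.2.1 x hx, hG0.2.2.1 x hx]
        have hGm : G ∈ Nb ty I (ext a.2) p E1 := ⟨hG.1, hG.2.1.trans hG0.2.1, hGx, hG.2.2.2⟩
        obtain ⟨E2, hE2, hE2s⟩ := amalg hb hE1g hGm
        refine ⟨E2, B_sub hE1 le_rfl hE2, fun b hbs => ?_⟩
        rcases Finset.mem_insert.1 hbs with rfl | hbs
        · refine hmono _ _ _ _ hE2s ?_
          rw [← Nb_congr hGx]
          exact hGQ
        · exact hmono _ _ _ _ (Nb_sub hE2.2.1) (hE1s b hbs)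
      · refine ⟨E1, hE1, fun b hbs => ?_⟩
        rcases Finset.mem_insert.1 hbs with rfl | hbs
        · rw [not_nonempty_iff_eq_empty.1 hne]
          exact hempty _
        · exact hE1s b hbs
  obtain ⟨E', hE', hs⟩ := main Finset.univ
  refine ⟨E', hE', fun i hi h => ?_⟩
  by_cases hne : (Nb ty I h p E').Nonempty
  · obtain ⟨G, hG⟩ := hne
    have hlt : ∀ x, x < p → h x < p := fun x hx => by
      rw [← hG.2.2.1 x hx]
      exact lt_of_le_of_lt (hG.1.le x) hx
    have := hs (⟨i, by omega⟩, fun x => ⟨h x, hlt x x.2⟩) (Finset.mem_univ _)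
    rw [Nb_congr (h' := h)] at this
    · exact this
    · intro x hx
      simp [ext, hx]
  · rw [not_nonempty_iff_eq_empty.1 hne]
    exact hempty _

/-- General fusion. -/
theorem gf {E0 : ℕ → ℕ} {q : ℕ} (hb : Base ty I E0 q) (Q : ℕ → ℕ → Set (ℕ → ℕ) → Prop)
    (hmono : ∀ i p Y Y', Y' ⊆ Y → Q i p Y → Q i p Y')
    (hdense : ∀ i E p, Good ty I E0 q E p → ∃ G ∈ B ty I p E, Q i p (B ty I p G))
    {E : ℕ → ℕ} {p : ℕ} (hE : Good ty I E0 q E p) :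
    ∃ F ∈ B ty I p E, ∀ i p', p + i ≤ p' → F p' = p' → ∀ h, Q i p' (Nb ty I h p' F) := by
  obtain ⟨f, hf0, hfI, hfR⟩ := dep_seq (St := (ℕ → ℕ) × ℕ) (fun _ s => Good ty I E0 q s.1 s.2)
    (fun _ s s' => s'.1 ∈ B ty I s.2 s.1 ∧ s'.2 = nx s'.1 s.2 ∧
      ∀ i, i ≤ s.2 → ∀ h, Q i s.2 (Nb ty I h s.2 s'.1)) (E, p) hE (by
    rintro j ⟨e, r⟩ hg
    obtain ⟨e', he', hQ⟩ := gf_step hb Q hmono hdense hg r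
    have hn := he'.1.nx_mem r
    exact ⟨(e', nx e' r), hg.of_B he' hn.1.le hn.2, he', rfl, hQ⟩)
  have hp : StrictMono (fun j => (f j).2) := by
    apply strictMono_nat_of_lt_succ
    intro j
    have := (hfR j).2.1
    have h2 := (hfI (j + 1)).sp.nx_mem (f j).2
    omega
  obtain ⟨F, hF⟩ := fusion (ty := ty) (I := I) (E := fun j => (f j).1) (p := fun j => (f j).2)
    (fun j => (hfI j).sp) hp (fun j => (hfR j).1.2.1) (fun j => (hfR j).1.2.2.1)
    (fun j => (hfR j).1.2.2.2)
  have hF0 := hF 0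
  rw [hf0] at hF0
  refine ⟨F, hF0, fun i p' hip hfx h => ?_⟩
  -- `p'` is one of the `p_j`
  have hex : ∃ j, p' < (f j).2 := ⟨p' + 1, lt_of_lt_of_le (Nat.lt_succ_self _) hp.le_apply⟩
  classical
  have h1 := Nat.find_spec hex
  have h2 : Nat.find hex ≠ 0 := by
    intro h0
    rw [h0, hf0] at h1
    simp only at h1
    omega
  obtain ⟨j, hj⟩ : ∃ j, Nat.find hex = j + 1 := ⟨Nat.find hex - 1, by omega⟩
  have h3 : (f j).2 ≤ p' := not_lt.1 (Nat.find_min hex (by omega))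
  rw [hj] at h1
  have h4 : p' = (f j).2 := by
    by_contra hne
    have h5 : (f (j + 1)).1 p' = p' := by rw [← (hF (j + 1)).2.2.1 p' h1, hfx]
    have h6 := nx_le (show (f j).2 < p' by omega) h5
    rw [← (hfR j).2.1] at h6
    omega
  have h5 := (hfR j).2.2 i (by omega) h
  rw [h4]
  exact hmono _ _ _ _ (Nb_sub (hF (j + 1)).2.1) h5

end PartD

section PartE
variable {ty : ℕ → ℕ} {I : ℕ → Set ℕ}

/-- Pigeonhole (A4). -/
theorem pigeon {E0 : ℕ → ℕ} {q : ℕ} (hb : Base ty I E0 q) {E : ℕ → ℕ} {p : ℕ}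
    (hE : Good ty I E0 q E p) (Col : (ℕ → ℕ) → Prop)
    (hCol : ∀ F ∈ B ty I p E, ∀ F' ∈ B ty I p E, nx F p = nx F' p →
      (∀ x, x < nx F p → F x = F' x) → Col F → Col F') :
    ∃ G ∈ B ty I p E, (∀ F ∈ B ty I p G, Col F) ∨ ∀ F ∈ B ty I p G, ¬ Col F := by
  classical
  let L : Type := {y : ℕ // y ≤ p ∧ E y = y}
  have hLfin : Finite L := by
    apply Finite.of_injective (fun y : L => (⟨y.1, Nat.lt_succ_of_le y.2.1⟩ : Fin (p + 1)))
    intro a b hab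
    apply Subtype.ext
    simpa using hab
  have hLne : Nonempty L := ⟨⟨p, le_rfl, hE.fx⟩⟩
  have hch : ∀ z, E z = z → ∃ a : L, Al ty I E (ty a.1) z := by
    intro z hz
    obtain ⟨y, hy1, hy2, hy3⟩ := hb.H E hE.sp hE.le z hz
    exact ⟨⟨y, hy1.trans hE.qp, hy2⟩, hy3⟩
  choose! r hr using hch
  let ρ : ℕ → L → L := fun z a => if Al ty I E (ty a.1) z then a else r z
  have hρ : ∀ z, E z = z → ∀ a, Al ty I E (ty (ρ z a).1) z := by
    intro z hz a
    simp only [ρ]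
    split_ifs with h
    · exact h
    · exact hr z hz
  let S : ℕ → Set ℕ := fun t => {x | p < x ∧ E x = x ∧ ty x = t}
  have hS : ∀ t, (S t).Infinite := by
    intro t
    rw [Set.infinite_iff_exists_gt]
    intro a
    obtain ⟨x, h1, h2, h3⟩ := hE.sp.exists_type t (a + p + 1)
    exact ⟨x, ⟨by omega, h2, h3⟩, by omega⟩
  let n := cnt E p
  let τ : ℕ → ℕ := fun j => sigmaSeq (n + (j + 1))
  let Fw : (ℕ → L) → ℕ → ℕ := fun w x => if E x ≤ p then E x else (ρ (E x) (w (E x))).1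
  let C : (ℕ → L) → ℕ → Prop := fun w l =>
    ∃ F ∈ B ty I p E, nx F p = l ∧ (∀ x, x < l → F x = Fw w x) ∧ Col F
  have hC : ∀ w w' l, (∀ z, z < l → w z = w' z) → C w l → C w' l := by
    rintro w w' l hww ⟨F, h1, h2, h3, h4⟩
    refine ⟨F, h1, h2, fun x hx => ?_, h4⟩
    rw [h3 x hx]
    have := hE.sp.le x
    simp only [Fw]
    rw [hww (E x) (by omega)]
  obtain ⟨g, k, ε, hk, hgk, hgv, hε⟩ := tcs S hS τ (sigmaSeq (n + 1)) C
    (fun w w' l h => ⟨hC w w' l h, hC w' w l (fun z hz => (h z hz).symm)⟩)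
  let κ : ℕ → ℕ := fun j => Nat.casesOn j p k
  have hkS : ∀ j, k j ∈ S (τ j) := fun j => (hgv (k j) j (hgk j)).2
  have hκ : StrictMono κ := by
    apply strictMono_nat_of_lt_succ
    intro j
    cases j with
    | zero => exact (hkS 0).1
    | succ j => exact hk (Nat.lt_succ_self j)
  let φ : ℕ → ℕ := fun z => if z = p then p else Sum.elim (fun a => (ρ z a).1) k (g z)
  obtain ⟨h1, h2, h3, h4⟩ := mkE_spec (φ := φ) (p0 := p) (κ := κ) hE.sp hκ le_rfl (by
    intro j
    cases j with
    | zero => exact hE.fx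
    | succ j => exact (hkS j).2.1) (by
    intro j
    cases j with
    | zero => exact hE.sp.sig p hE.fx
    | succ j => exact (hkS j).2.2) (by
    intro j
    cases j with
    | zero => simp [φ, κ]
    | succ j =>
      have := (hkS j).1
      show φ (k j) = k j
      simp only [φ]
      rw [if_neg (by omega), hgk]; rfl) (by
    intro z hpz hz
    by_cases hzp : z = p
    · have : φ z = p := by simp [φ, hzp]
      rw [this, hzp]
      exact ⟨le_rfl, Or.inr ⟨0, rfl⟩, hE.sp.al_self p⟩
    · have hφ : φ z = Sum.elim (fun a => (ρ z a).1) k (g z) := by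
        simp only [φ]; rw [if_neg hzp]
      rw [hφ]
      cases hg : g z with
      | inl a =>
        show (ρ z a).1 ≤ z ∧ _
        refine ⟨(ρ z a).2.1.trans hpz, ?_, hρ z hz a⟩
        rcases (ρ z a).2.1.eq_or_lt with h | h
        · exact Or.inr ⟨0, h⟩
        · exact Or.inl ⟨h, (ρ z a).2.2⟩
      | inr j =>
        obtain ⟨h5, h6⟩ := hgv z j hg
        refine ⟨h5, Or.inr ⟨j + 1, rfl⟩, ?_⟩
        show Al ty I E (ty (k j)) z
        rw [(hkS j).2.2, ← h6.2.2]
        exact hE.sp.al_self z)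
  set G := mkE E p φ with hG
  have hGp : G p = p := (h4 p).2 (Or.inr ⟨0, rfl⟩)
  have hGB : G ∈ B ty I p E := ⟨h1, h2, h3, hGp⟩
  -- main point
  have main : ∀ F ∈ B ty I p G, ∃ w : ℕ → L, (C w (nx F p) ↔ ε) ∧ ∀ x, x < nx F p → F x = Fw w x := by
    intro F hF
    have hFE : F ∈ B ty I p E := B_sub hGB le_rfl hF
    have hn := hF.1.nx_mem p
    obtain ⟨j, hj⟩ : ∃ j, nx F p = k j := by
      have h5 := hF.2.1.fix hF.1 h1 hn.2
      rcases (h4 _).1 h5 with h6 | ⟨i, hi⟩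
      · omega
      · cases i with
        | zero => exact absurd hi (by show ¬ (nx F p = p); omega)
        | succ j => exact ⟨j, hi⟩
    have hcntp : cnt F p = cnt E p := by
      apply cnt_congr
      intro y hy
      rw [hFE.2.2.1 y hy]
    have hτ : τ j = sigmaSeq (n + 1) := by
      rw [← (hkS j).2.2, ← hj, hF.1.sig _ hn.2, hF.1.cnt_nx hF.2.2.2, hcntp]
    have hlowfix : ∀ y, y ≤ p → E y = y → F y = y := by
      intro y hy hy'
      rcases hy.eq_or_lt with rfl | h
      · exact hF.2.2.2
      · rw [hFE.2.2.1 y h, hy']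
    have hval : ∀ x, x < nx F p → F x ≤ p := by
      intro x hx
      by_contra hlt
      have := nx_le (show p < F x by omega) (hF.1.idem x)
      have := hF.1.le x
      omega
    let ψ : ℕ → L := fun i => if h : F (k i) ≤ p then
      ⟨F (k i), h, hFE.2.1.fix hF.1 hE.sp (hF.1.idem _)⟩ else ⟨p, le_rfl, hE.fx⟩
    refine ⟨fun z => Sum.elim id ψ (g z), ?_, ?_⟩
    · rw [hj]
      exact hε j ψ hτ
    · intro x hx
      simp only [Fw]
      have hEx := hE.sp.le x
      have hidem := hE.sp.idem x
      split_ifs with hc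
      · rw [← hFE.2.1 x]
        exact hlowfix _ hc hidem
      · rw [← hFE.2.1 x]
        generalize E x = z at *
        have hGz : G z = Sum.elim (fun a => (ρ z a).1) k (g z) := by
          simp only [hG, mkE, φ]
          rw [hidem, if_neg (by omega), if_neg (by omega)]
        cases hg : g z with
        | inl a =>
          show F z = (ρ z a).1
          rw [hg] at hGz
          have hGz' : G z = (ρ z a).1 := hGz
          rw [← hF.2.1 z, hGz']
          exact hlowfix _ (ρ z a).2.1 (ρ z a).2.2
        | inr i =>
          rw [hg] at hGz
          have hGz' : G z = k i := hGz
          show F z = (ρ z (ψ i)).1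
          have hki : F (k i) = F z := by rw [← hGz', hF.2.1 z]
          have hle : F (k i) ≤ p := by rw [hki]; exact hval z (by omega)
          have hψ : (ψ i).1 = F z := by
            simp only [ψ]
            rw [dif_pos hle]
            exact hki
          have hal : Al ty I E (ty (ψ i).1) z := by
            rw [hψ]
            exact hFE.2.1.al' (hF.1.al_self _)
          have : ρ z (ψ i) = ψ i := by simp only [ρ]; rw [if_pos hal]
          rw [this, hψ]
  refine ⟨G, hGB, ?_⟩
  by_cases he : ε
  · left
    intro F hF
    obtain ⟨w, hw1, hw2⟩ := main F hF
    obtain ⟨F', h5, h6, h7, h8⟩ := hw1.2 he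
    refine hCol F' h5 F (B_sub hGB le_rfl hF) h6 (fun x hx => ?_) h8
    rw [h6] at hx
    rw [h7 x hx, hw2 x hx]
  · right
    intro F hF hc
    obtain ⟨w, hw1, hw2⟩ := main F hF
    exact he (hw1.1 ⟨F, B_sub hGB le_rfl hF, rfl, hw2, hc⟩)

end PartE

section PartF
variable {ty : ℕ → ℕ} {I : ℕ → Set ℕ}

/-- Completely Ramsey below `E0`. -/
def CR (ty : ℕ → ℕ) (I : ℕ → Set ℕ) (E0 : ℕ → ℕ) (q : ℕ) (X : Set (ℕ → ℕ)) : Prop :=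
  ∀ E p, Good ty I E0 q E p → ∃ G ∈ B ty I p E, B ty I p G ⊆ X ∨ B ty I p G ⊆ Xᶜ

def Null (ty : ℕ → ℕ) (I : ℕ → Set ℕ) (E0 : ℕ → ℕ) (q : ℕ) (X : Set (ℕ → ℕ)) : Prop :=
  ∀ E p, Good ty I E0 q E p → ∃ G ∈ B ty I p E, B ty I p G ⊆ Xᶜ

/-- Open-like sets. -/
def OpenL (ty : ℕ → ℕ) (I : ℕ → Set ℕ) (E0 : ℕ → ℕ) (U : Set (ℕ → ℕ)) : Prop :=
  ∀ F ∈ U, Sp ty I F → Le F E0 → ∃ N, ∀ p, N ≤ p → F p = p → B ty I p F ⊆ U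

theorem OpenL.cr {E0 : ℕ → ℕ} {q : ℕ} (hb : Base ty I E0 q) {U : Set (ℕ → ℕ)}
    (hU : OpenL ty I E0 U) : CR ty I E0 q U := by
  -- first density
  have hD : ∀ E p, Good ty I E0 q E p → ∃ G ∈ B ty I p E,
      (B ty I p G ⊆ U ∨ ∀ F ∈ B ty I p G, ¬ B ty I p F ⊆ U) := by
    intro E p hE
    by_cases h : ∃ G ∈ B ty I p E, B ty I p G ⊆ U
    · obtain ⟨G, hG, hGU⟩ := h
      exact ⟨G, hG, Or.inl hGU⟩
    · push Not at h
      exact ⟨E, hE.sp.mem_B hE.fx, Or.inr h⟩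
  have hD' : ∀ E p, Good ty I E0 q E p → ∃ G ∈ B ty I p E,
      (B ty I p G ⊆ U ∨ ∀ F ∈ B ty I p G, ¬ B ty I (nx F p) F ⊆ U) := by
    intro E p hE
    obtain ⟨F1, hF1, hQ⟩ := gf hb (fun _ p Y => Y ⊆ U ∨ ∀ F ∈ Y, ¬ B ty I p F ⊆ U)
      (fun i p Y Y' hY h => h.imp (fun h => hY.trans h) (fun h F hF => h F (hY hF)))
      (fun _ E p h => hD E p h) hE
    have hF1g := hE.of_B' hF1
    obtain ⟨G, hG, hc⟩ := pigeon hb hF1g (fun F => Nb ty I F (nx F p) F1 ⊆ U) (by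
      intro F _ F' _ hn hag h
      rw [← hn, ← Nb_congr hag]
      exact h)
    refine ⟨G, B_sub hF1 le_rfl hG, ?_⟩
    rcases hc with hc | hc
    · left
      intro F hF
      have hFF := B_sub hG le_rfl hF
      exact hc F hF (mem_Nb_self hF.1 hFF.2.1 (hF.1.nx_mem p).2)
    · right
      intro F hF
      have hFF := B_sub hG le_rfl hF
      have hn := hF.1.nx_mem p
      rcases hQ 0 (nx F p) (by omega) (hFF.2.1.fix hF.1 hF1g.sp hn.2) F with h | h
      · exact absurd h (hc F hF)
      · exact h F (mem_Nb_self hF.1 hFF.2.1 hn.2)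
  intro E p hE
  obtain ⟨F, hF, hQ⟩ := gf hb (fun _ p Y => Y ⊆ U ∨ ∀ F ∈ Y, ¬ B ty I (nx F p) F ⊆ U)
      (fun i p Y Y' hY h => h.imp (fun h => hY.trans h) (fun h F hF => h F (hY hF)))
      (fun _ E p h => hD' E p h) hE
  have hFg := hE.of_B' hF
  by_cases hex : ∃ G ∈ B ty I p F, B ty I p G ⊆ U
  · obtain ⟨G, hG, hGU⟩ := hex
    exact ⟨G, B_sub hF le_rfl hG, Or.inl hGU⟩
  push Not at hex
  refine ⟨F, hF, Or.inr ?_⟩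
  intro X hX hXU
  obtain ⟨N, hN⟩ := hU X hXU hX.1 (hX.2.1.trans hFg.le)
  have hmain : ∀ k, ∀ G ∈ Nb ty I X (nfx X (cnt X p + k)) F,
      ¬ B ty I (nfx X (cnt X p + k)) G ⊆ U := by
    intro k
    induction k with
    | zero =>
      intro G hG
      rw [Nat.add_zero, nfx_cnt hX.2.2.2] at hG ⊢
      apply hex
      exact ⟨hG.1, hG.2.1, fun x hx => by rw [hG.2.2.1 x hx, hX.2.2.1 x hx], hG.2.2.2⟩
    | succ k ih =>
      intro G hG
      set pk := nfx X (cnt X p + k) with hpk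
      have hfk : X pk = pk := hX.1.nfx_fix _
      have hppk : p ≤ pk := by
        have h1 : nfx X (cnt X p) ≤ pk := hX.1.nfx_mono.monotone (by omega)
        rwa [nfx_cnt hX.2.2.2] at h1
      have hlt : pk < nfx X (cnt X p + (k + 1)) := hX.1.nfx_mono (by omega)
      have hGk : G ∈ Nb ty I X pk F := by
        refine ⟨hG.1, hG.2.1, fun x hx => hG.2.2.1 x (by omega), ?_⟩
        rw [hG.2.2.1 pk hlt, hfk]
      have hnx : nx G pk = nfx X (cnt X p + (k + 1)) := by
        apply nx_eq hlt hG.2.2.2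
        intro y hy1 hy2 hy3
        rw [hG.2.2.1 y hy2] at hy3
        have h1 := cnt_lt hfk hy1
        have h2 := cnt_lt hy3 hy2
        rw [hpk, hX.1.cnt_nfx] at h1
        rw [hX.1.cnt_nfx] at h2
        omega
      rcases hQ 0 pk (by omega) (hX.2.1.fix hX.1 hFg.sp hfk) X with h | h
      · exact absurd ((show B ty I pk X ⊆ Nb ty I X pk F from Nb_sub hX.2.1).trans h)
          (ih X (mem_Nb_self hX.1 hX.2.1 hfk))
      · rw [← hnx]
        exact h G hGk
  have hfN := hX.1.nfx_fix (cnt X p + N)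
  refine hmain N X (mem_Nb_self hX.1 hX.2.1 hfN) (hN _ ?_ hfN)
  have : cnt X p + N ≤ nfx X (cnt X p + N) := hX.1.nfx_mono.le_apply
  omega

theorem CR.compl {E0 : ℕ → ℕ} {q : ℕ} {X : Set (ℕ → ℕ)} (h : CR ty I E0 q X) :
    CR ty I E0 q Xᶜ := by
  intro E p hE
  obtain ⟨G, hG, h⟩ := h E p hE
  refine ⟨G, hG, ?_⟩
  rw [compl_compl]
  exact h.symm

theorem CR.iUnion {E0 : ℕ → ℕ} {q : ℕ} (hb : Base ty I E0 q) {X : ℕ → Set (ℕ → ℕ)}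
    (h : ∀ i, CR ty I E0 q (X i)) : CR ty I E0 q (⋃ i, X i) := by
  intro E p hE
  obtain ⟨F, hF, hQ⟩ := gf hb (fun i _ Y => Y ⊆ X i ∨ Y ⊆ (X i)ᶜ)
    (fun i p Y Y' hY h => h.imp (fun h => hY.trans h) (fun h => hY.trans h))
    (fun i E p hE => h i E p hE) hE
  have hFg := hE.of_B' hF
  have hop : OpenL ty I E0 {G | G ∈ B ty I p F ∧ G ∈ ⋃ i, X i} := by
    rintro G ⟨hG1, hG2⟩ _ _
    obtain ⟨i, hi⟩ := mem_iUnion.1 hG2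
    refine ⟨p + i, fun p' hp' hfx => ?_⟩
    have hGm : G ∈ Nb ty I G p' F := mem_Nb_self hG1.1 hG1.2.1 hfx
    rcases hQ i p' hp' (hG1.2.1.fix hG1.1 hFg.sp hfx) G with h1 | h1
    · intro K hK
      exact ⟨B_sub hG1 (by omega) hK, mem_iUnion.2 ⟨i, h1 (Nb_sub hG1.2.1 hK)⟩⟩
    · exact absurd hi (h1 hGm)
  obtain ⟨G, hG, h1⟩ := hop.cr hb F p hFg
  refine ⟨G, B_sub hF le_rfl hG, h1.imp (fun h2 K hK => (h2 hK).2) (fun h2 K hK hK' => ?_)⟩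
  exact h2 hK ⟨B_sub hG le_rfl hK, hK'⟩

theorem CR.union {E0 : ℕ → ℕ} {q : ℕ} {X Y : Set (ℕ → ℕ)} (hX : CR ty I E0 q X)
    (hY : CR ty I E0 q Y) : CR ty I E0 q (X ∪ Y) := by
  intro E p hE
  obtain ⟨G, hG, h1⟩ := hX E p hE
  obtain ⟨K, hK, h2⟩ := hY G p (hE.of_B' hG)
  refine ⟨K, B_sub hG le_rfl hK, ?_⟩
  have hs := B_sub hK le_rfl
  rcases h1 with h1 | h1
  · exact Or.inl fun F hF => Or.inl (h1 (B_sub hK le_rfl hF))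
  · rcases h2 with h2 | h2
    · exact Or.inl fun F hF => Or.inr (h2 hF)
    · right
      rintro F hF (h3 | h3)
      · exact h1 (B_sub hK le_rfl hF) h3
      · exact h2 hF h3

theorem CR.inter {E0 : ℕ → ℕ} {q : ℕ} {X Y : Set (ℕ → ℕ)} (hX : CR ty I E0 q X)
    (hY : CR ty I E0 q Y) : CR ty I E0 q (X ∩ Y) := by
  have := (hX.compl.union hY.compl).compl
  rwa [compl_union, compl_compl, compl_compl] at this

theorem Null.iUnion {E0 : ℕ → ℕ} {q : ℕ} (hb : Base ty I E0 q) {X : ℕ → Set (ℕ → ℕ)}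
    (h : ∀ i, Null ty I E0 q (X i)) : Null ty I E0 q (⋃ i, X i) := by
  intro E p hE
  obtain ⟨F, hF, hQ⟩ := gf hb (fun i _ Y => Y ⊆ (X i)ᶜ)
    (fun i p Y Y' hY h => hY.trans h) (fun i E p hE => h i E p hE) hE
  refine ⟨F, hF, fun G hG hGX => ?_⟩
  obtain ⟨i, hi⟩ := mem_iUnion.1 hGX
  obtain ⟨p', hp', hfx⟩ := hG.1.inf (p + i)
  exact hQ i p' hp' (hG.2.1.fix hG.1 hF.1 hfx) G (mem_Nb_self hG.1 hG.2.1 hfx) hi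

/-- The union of basic sets disjoint from `X`. -/
def Oof (ty : ℕ → ℕ) (I : ℕ → Set ℕ) (E0 : ℕ → ℕ) (q : ℕ) (X : Set (ℕ → ℕ)) : Set (ℕ → ℕ) :=
  {F | ∃ G p, Good ty I E0 q G p ∧ F ∈ B ty I p G ∧ B ty I p G ⊆ Xᶜ}

theorem Oof_cr {E0 : ℕ → ℕ} {q : ℕ} (hb : Base ty I E0 q) (X : Set (ℕ → ℕ)) :
    CR ty I E0 q (Oof ty I E0 q X) := by
  apply OpenL.cr hb
  rintro F ⟨G, p, h1, h2, h3⟩ _ _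
  refine ⟨p, fun p' hp' hfx K hK => ⟨G, p, h1, B_sub h2 hp' hK, h3⟩⟩

theorem CR.souslin {E0 : ℕ → ℕ} {q : ℕ} (hb : Base ty I E0 q) {A : List ℕ → Set (ℕ → ℕ)}
    (hA : ∀ s, CR ty I E0 q (A s)) : CR ty I E0 q (souslinOp A) := by
  let X : List ℕ → Set (ℕ → ℕ) := fun s =>
    {F | ∃ x : ℕ → ℕ, s = (List.range s.length).map x ∧ ∀ n, F ∈ A ((List.range n).map x)}
  let Y : List ℕ → Set (ℕ → ℕ) := fun s => A s ∩ (Oof ty I E0 q (X s))ᶜ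
  let Z : List ℕ → Set (ℕ → ℕ) := fun s => Y s ∩ (⋃ i, Y (s ++ [i]))ᶜ
  have hXY : ∀ s, X s ⊆ Y s := by
    intro s F hF
    refine ⟨?_, ?_⟩
    · obtain ⟨x, hx1, hx2⟩ := hF
      rw [hx1]; exact hx2 _
    · rintro ⟨G, p, _, h2, h3⟩
      exact h3 h2 hF
  have hXs : ∀ s F, F ∈ X s → ∃ i, F ∈ X (s ++ [i]) := by
    rintro s F ⟨x, hx1, hx2⟩
    refine ⟨x s.length, x, ?_, hx2⟩
    rw [List.length_append, List.length_singleton, List.range_succ, List.map_append, ← hx1]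
    rfl
  have hY : ∀ s, CR ty I E0 q (Y s) := fun s => (hA s).inter (Oof_cr hb _).compl
  have hZ : ∀ s, CR ty I E0 q (Z s) := fun s => (hY s).inter (CR.iUnion hb fun i => hY _).compl
  have hZn : ∀ s, Null ty I E0 q (Z s) := by
    intro s E p hE
    obtain ⟨G, hG, h | h⟩ := hZ s E p hE
    · exfalso
      have hGg := hE.of_B' hG
      have hGB := hGg.sp.mem_B hGg.fx
      refine (h hGB).1.2 ⟨G, p, hGg, hGB, fun F hF hFX => ?_⟩
      obtain ⟨i, hi⟩ := hXs s F hFX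
      exact (h hF).2 (mem_iUnion.2 ⟨i, hXY _ hi⟩)
    · exact ⟨G, hG, h⟩
  obtain ⟨f, hf⟩ := exists_surjective_nat (List ℕ)
  have hN : Null ty I E0 q (⋃ i, Z (f i)) := Null.iUnion hb fun i => hZn _
  have hXe : souslinOp A = X [] := by
    ext F
    simp only [souslinOp, mem_iUnion, mem_iInter, X]
    constructor
    · rintro ⟨x, hx⟩
      exact ⟨x, by simp, hx⟩
    · rintro ⟨x, _, hx⟩
      exact ⟨x, hx⟩
  have hdiff : ∀ F, F ∈ Y [] → F ∉ ⋃ i, Z (f i) → F ∈ X [] := by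
    intro F hF hFZ
    have hFZ' : ∀ s, F ∉ Z s := by
      intro s hs
      obtain ⟨i, rfl⟩ := hf s
      exact hFZ (mem_iUnion.2 ⟨i, hs⟩)
    have hstep : ∀ s, F ∈ Y s → ∃ i, F ∈ Y (s ++ [i]) := by
      intro s hs
      by_contra hno
      exact hFZ' s ⟨hs, fun h => hno (mem_iUnion.1 h)⟩
    obtain ⟨g, hg0, hgI, hgR⟩ := dep_seq (fun _ s => F ∈ Y s) (fun _ s s' => ∃ i, s' = s ++ [i]) []
      hF (fun j s hs => by
        obtain ⟨i, hi⟩ := hstep s hs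
        exact ⟨_, hi, i, rfl⟩)
    choose x hx using hgR
    have hgx : ∀ n, g n = (List.range n).map x := by
      intro n
      induction n with
      | zero => rw [hg0]; rfl
      | succ n ih => rw [hx, ih, List.range_succ, List.map_append]; rfl
    refine ⟨x, by simp, fun n => ?_⟩
    rw [← hgx]
    exact (hgI n).1
  rw [hXe]
  intro E p hE
  obtain ⟨G, hG, h1⟩ := hY [] E p hE
  obtain ⟨K, hK, h2⟩ := hN G p (hE.of_B' hG)
  refine ⟨K, B_sub hG le_rfl hK, h1.imp (fun h F hF => ?_) (fun h F hF hFX => ?_)⟩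
  · exact hdiff F (h (B_sub hK le_rfl hF)) (h2 hF)
  · exact h (B_sub hK le_rfl hF) (hXY _ hFX)

end PartF

section PartG
variable {ty : ℕ → ℕ} {I : ℕ → Set ℕ}

/-- A rigid first point. -/
def Rg (ty : ℕ → ℕ) (I : ℕ → Set ℕ) (i : ℕ) (F : ℕ → ℕ) (x : ℕ) : Prop :=
  F x = x ∧ cnt F x = 2 ^ i - 1 ∧ ∀ t, t < i → ¬ Al ty I F t x

theorem cnt_eq_agree {e e' : ℕ → ℕ} (h : ∀ y, e' y = y → e y = y) {x : ℕ} (hx : cnt e x ≤ cnt e' x)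
    {v : ℕ} (hv : v < x) (hev : e v = v) : e' v = v := by
  have h1 : {y ∈ Finset.range x | e' y = y} = {y ∈ Finset.range x | e y = y} := by
    apply Finset.eq_of_subset_of_card_le
    · intro y hy
      rw [Finset.mem_filter] at hy ⊢
      exact ⟨hy.1, h y hy.2⟩
    · simpa only [cnt, Nat.count_eq_card_filter_range] using hx
  have h2 : v ∈ {y ∈ Finset.range x | e y = y} := by
    rw [Finset.mem_filter, Finset.mem_range]
    exact ⟨hv, hev⟩
  rw [← h1, Finset.mem_filter] at h2
  exact h2.2

theorem Rg.ty_eq {F : ℕ → ℕ} (hF : Sp ty I F) {i x : ℕ} (h : Rg ty I i F x) : ty x = i := by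
  rw [hF.sig x h.1, h.2.1, sigma_pow]

theorem Rg.persist {F F' : ℕ → ℕ} (hF : Sp ty I F) (hF' : Sp ty I F') (hL : Le F' F) {i x : ℕ}
    (h : Rg ty I i F x) : Rg ty I i F' x ∧ ∀ y, y < x → F' y = F y := by
  have hpos : 0 < 2 ^ i := by positivity
  have hsub : ∀ y, F' y = y → F y = y := fun y hy => hL.fix hF' hF hy
  have hx : F' x = x := by
    by_contra hne
    have hlt : F' x < x := lt_of_le_of_ne (hF'.le x) hne
    have hfy := hF'.idem x
    have h1 : cnt F (F' x) < cnt F x := cnt_lt (hsub _ hfy) hlt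
    have h2 := cnt_sub hsub (F' x)
    have h3 := sigma_pow_le (cnt F' (F' x))
    rw [← hF'.sig _ hfy] at h3
    have h4 : 2 ^ ty (F' x) < 2 ^ i := by
      have := h.2.1
      omega
    have h5 : ty (F' x) < i := (Nat.pow_lt_pow_iff_right (by norm_num)).1 h4
    exact h.2.2 _ h5 (hL.al' (hF'.al_self _))
  have h3 := sigma_pow_le (cnt F' x)
  rw [← hF'.sig _ hx, h.ty_eq hF] at h3
  have h4 := cnt_sub hsub x
  have h5 := h.2.1
  refine ⟨⟨hx, by omega, fun t ht hA => h.2.2 t ht (hL.al hx hA)⟩, fun y hy => ?_⟩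
  rw [← hL y]
  exact cnt_eq_agree hsub (by omega) (lt_of_le_of_lt (hF.le y) hy) (hF.idem y)

theorem Rg.triv {F F' : ℕ → ℕ} (hF : Sp ty I F) (hF' : Sp ty I F') (hL : Le F' F)
    (h : ∀ N, ∃ i, N ≤ i ∧ ∃ x, Rg ty I i F x) : F' = F := by
  funext y
  obtain ⟨i, hi, x, hx⟩ := h (y + 1)
  refine (hx.persist hF hF' hL).2 y ?_
  have h1 := cnt_le F x
  have h2 := hx.2.1
  have h3 : i < 2 ^ i := Nat.lt_two_pow_self
  omega

/-- First reduction. -/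
theorem claim1 {E : ℕ → ℕ} (hE : Sp ty I E)
    (nt : ∀ F, Sp ty I F → Le F E → ∃ F', Sp ty I F' ∧ Le F' F ∧ F' ≠ F) :
    ∃ E1 s q, Sp ty I E1 ∧ Le E1 E ∧ Rg ty I s E1 q ∧
      ∀ F, Sp ty I F → Le F E1 → ∀ i x, Rg ty I i F x → i ≤ s := by
  have hR0 : ∀ F, Sp ty I F → Rg ty I 0 F 0 := fun F hF => ⟨hF.zero, by simp [cnt], by simp⟩
  obtain ⟨F, hF, hFE, N, hN⟩ : ∃ F, Sp ty I F ∧ Le F E ∧ ∃ N, ∀ F', Sp ty I F' → Le F' F →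
      ∀ i x, Rg ty I i F' x → i < N := by
    by_contra hno
    push Not at hno
    obtain ⟨f, hf0, hfI, hfR⟩ := dep_seq (St := (ℕ → ℕ) × ℕ × ℕ)
      (fun j s => Sp ty I s.1 ∧ Le s.1 E ∧ Rg ty I s.2.2 s.1 s.2.1 ∧ j ≤ s.2.2)
      (fun _ s s' => Le s'.1 s.1 ∧ s.2.2 < s'.2.2) (E, 0, 0)
      ⟨hE, hE.le_refl, hR0 E hE, le_rfl⟩ (by
        rintro j ⟨e, r, i⟩ ⟨h1, h2, h3, h4⟩
        obtain ⟨e', he', hL', i', x', hx', hi'⟩ := hno e h1 h2 (i + 1)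
        refine ⟨(e', x', i'), ⟨he', hL'.trans h2, hx', ?_⟩, hL', hi'⟩
        simp only at h4 ⊢
        omega)
    have hp : StrictMono (fun j => (f j).2.1) := by
      apply strictMono_nat_of_lt_succ
      intro j
      have h1 := ((hfI j).2.2.1.persist (hfI j).1 (hfI (j + 1)).1 (hfR j).1).1
      have h2 := (hfI (j + 1)).2.2.1
      have h3 : 2 ^ (f j).2.2 < 2 ^ (f (j + 1)).2.2 :=
        (Nat.pow_lt_pow_iff_right (by norm_num)).2 (hfR j).2
      have h4 : 0 < 2 ^ (f j).2.2 := by positivity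
      by_contra hlt
      have h5 := cnt_mono (f (j + 1)).1 (not_lt.1 hlt)
      rw [h1.2.1, h2.2.1] at h5
      omega
    obtain ⟨F, hF⟩ := fusion (ty := ty) (I := I) (E := fun j => (f j).1) (p := fun j => (f j).2.1)
      (fun j => (hfI j).1) hp (fun j => (hfR j).1)
      (fun j => ((hfI j).2.2.1.persist (hfI j).1 (hfI (j + 1)).1 (hfR j).1).2)
      (fun j => ((hfI j).2.2.1.persist (hfI j).1 (hfI (j + 1)).1 (hfR j).1).1.1)
    obtain ⟨F', h1, h2, h3⟩ := nt F (hF 0).1 ((hF 0).2.1.trans (hfI 0).2.1)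
    apply h3
    refine Rg.triv (hF 0).1 h1 h2 (fun N => ?_)
    exact ⟨(f N).2.2, (hfI N).2.2.2, _, ((hfI N).2.2.1.persist (hfI N).1 (hF 0).1 (hF N).2.1).1⟩
  let T : Set ℕ := {i | ∃ F', Sp ty I F' ∧ Le F' F ∧ ∃ x, Rg ty I i F' x}
  have hTne : T.Nonempty := ⟨0, F, hF, hF.le_refl, 0, hR0 F hF⟩
  have hTb : BddAbove T := ⟨N, by
    rintro i ⟨F', h1, h2, x, h3⟩
    exact (hN F' h1 h2 i x h3).le⟩
  obtain ⟨E1, h1, h2, q, h3⟩ := Nat.sSup_mem hTne hTb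
  refine ⟨E1, sSup T, q, h1, h2.trans hFE, h3, fun G hG hGL i x hx => ?_⟩
  exact le_csSup hTb ⟨G, hG, hGL.trans h2, x, hx⟩

/-- index shift -/
def shf (k : ℕ) : ℕ := k + 2 * 2 ^ Nat.log 2 (k + 1)

theorem shf_mono : StrictMono shf := by
  intro a b hab
  have h1 : Nat.log 2 (a + 1) ≤ Nat.log 2 (b + 1) := Nat.log_mono_right (by omega)
  have h2 : 2 ^ Nat.log 2 (a + 1) ≤ 2 ^ Nat.log 2 (b + 1) := Nat.pow_le_pow_right (by norm_num) h1
  unfold shf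
  omega

theorem shf_sigma (k : ℕ) : sigmaSeq (shf k) = sigmaSeq k := by
  obtain ⟨m, hm⟩ := sigma_exists k
  have h1 : sigmaSeq k ≤ Nat.log 2 (k + 1) := by
    apply Nat.le_log_of_pow_le (by norm_num)
    exact sigma_pow_le k
  obtain ⟨d, hd⟩ := Nat.exists_eq_add_of_le h1
  apply sigma_unique (m := m + 2 ^ d)
  unfold shf
  rw [hd, pow_add]
  have : k + 2 * (2 ^ sigmaSeq k * 2 ^ d) + 1 = (k + 1) + 2 * (2 ^ sigmaSeq k * 2 ^ d) := by ring
  rw [this]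
  nth_rewrite 1 [hm]
  ring

theorem shf_first (t : ℕ) : shf (2 ^ t - 1) = 2 ^ t * 3 - 1 := by
  have : 0 < 2 ^ t := by positivity
  unfold shf
  rw [Nat.sub_add_cancel this, Nat.log_pow (by norm_num)]
  omega

theorem pow_sub_lt {a b : ℕ} (h : a < b) : 2 ^ a - 1 < 2 ^ b - 1 := by
  have h1 : 2 ^ a < 2 ^ b := (Nat.pow_lt_pow_iff_right (by norm_num)).2 h
  have h2 : 0 < 2 ^ a := by positivity
  omega

theorem ty_nfx {F : ℕ → ℕ} (hF : Sp ty I F) (k : ℕ) : ty (nfx F k) = sigmaSeq k := by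
  rw [hF.sig _ (hF.nfx_fix k), hF.cnt_nfx]

/-- Part one: bad firsts are bounded. -/
theorem part1 {F : ℕ → ℕ} {s : ℕ} (hF : Sp ty I F) (hnt : ∃ F', Sp ty I F' ∧ Le F' F ∧ F' ≠ F)
    (hmax : ∀ G, Sp ty I G → Le G F → ∀ i x, Rg ty I i G x → i ≤ s) :
    ∃ v, ∀ x j, F x = x → cnt F x = 2 ^ j - 1 → (∀ t, t ≤ s → ¬ Al ty I F t x) → x ≤ v := by
  classical
  obtain ⟨F', hF', hL, hne⟩ := hnt
  have hsub : ∀ y, F' y = y → F y = y := fun y hy => hL.fix hF' hF hy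
  obtain ⟨v, hv1, hv2⟩ : ∃ v, F v = v ∧ F' v ≠ v := by
    by_contra hno
    push Not at hno
    apply hne
    funext y
    rw [← hL y]
    exact hno _ (hF.idem y)
  refine ⟨v, fun x j hx hj hbad => ?_⟩
  by_contra hlt
  have hcl : cnt F' x < cnt F x := by
    by_contra hge
    exact hv2 (cnt_eq_agree hsub (not_lt.1 hge) (by omega) hv1)
  have hxF' : F' x ≠ x := by
    intro hfx
    have h1 := sigma_pow_le (cnt F' x)
    rw [← hF'.sig x hfx, hF.sig x hx, hj, sigma_pow] at h1
    omega
  have hex : ∃ t, Al ty I F t x := ⟨_, hF.al_self x⟩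
  let i := Nat.find hex
  have hi : Al ty I F i x := Nat.find_spec hex
  have himin : ∀ t, t < i → ¬ Al ty I F t x := fun t ht => Nat.find_min hex ht
  have hsi : s < i := by
    by_contra hle
    exact hbad i (not_lt.1 hle) hi
  have hit : i ≤ ty (F' x) := Nat.find_min' hex (hL.al' (hF'.al_self _))
  have hidx := hF'.idem x
  let b := nfx F' (2 ^ i - 1)
  have hbx : b ≤ F' x := by
    have h1 := sigma_pow_le (cnt F' (F' x))
    rw [← hF'.sig _ hidx] at h1
    have h2 : 2 ^ i ≤ 2 ^ ty (F' x) := Nat.pow_le_pow_right (by norm_num) hit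
    have h3 : nfx F' (2 ^ i - 1) ≤ nfx F' (cnt F' (F' x)) := hF'.nfx_mono.monotone (by omega)
    rwa [nfx_cnt hidx] at h3
  have hb : F' b = b := hF'.nfx_fix _
  have htb : ty b = i := by rw [ty_nfx hF', sigma_pow]
  let φ : ℕ → ℕ := fun z => if z = x then b else F' z
  obtain ⟨h1, h2, h3, h4⟩ := mkE_spec (φ := φ) (p0 := 0) (κ := nfx F') hF hF'.nfx_mono (Nat.zero_le _)
    (fun j => hsub _ (hF'.nfx_fix j)) (fun j => by
      have : cnt F 0 = 0 := by simp [cnt]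
      rw [ty_nfx hF', this, Nat.zero_add]) (fun j => by
      have : nfx F' j ≠ x := by
        intro h
        have := hF'.nfx_fix j
        rw [h] at this
        exact hxF' this
      simp only [φ]
      rw [if_neg this]
      exact hF'.nfx_fix j) (fun z _ hz => by
      by_cases hzx : z = x
      · have : φ z = b := by simp [φ, hzx]
        rw [this, hzx, htb]
        exact ⟨hbx.trans (hF'.le x), Or.inr ⟨_, rfl⟩, hi⟩
      · have : φ z = F' z := by simp [φ, hzx]
        rw [this]
        exact ⟨hF'.le z, Or.inr ⟨_, (nfx_cnt (hF'.idem z)).symm⟩, hL.al' (hF'.al_self _)⟩)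
  have hxb : mkE F 0 φ x = b := by simp [mkE, φ, hx]
  have hfixeq : ∀ y, mkE F 0 φ y = y ↔ F' y = y := by
    intro y
    rw [h4 y]
    constructor
    · rintro (h | ⟨j, rfl⟩)
      · omega
      · exact hF'.nfx_fix j
    · intro h
      exact Or.inr ⟨_, (nfx_cnt h).symm⟩
  have := hmax _ h1 h2 i b ⟨(hfixeq b).2 hb, by
    rw [cnt_congr (e' := F') (fun y _ => hfixeq y)]
    exact hF'.cnt_nfx _, fun t ht hA => himin t ht (h2.al' (by rw [hxb]; exact hA))⟩
  omega

/-- Second reduction. -/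
theorem claim2 {F : ℕ → ℕ} {s : ℕ} (hF : Sp ty I F) (hnt : ∃ F', Sp ty I F' ∧ Le F' F ∧ F' ≠ F)
    (hmax : ∀ G, Sp ty I G → Le G F → ∀ i x, Rg ty I i G x → i ≤ s) (x : ℕ) (hx : F x = x) :
    ∃ t, t ≤ s ∧ Al ty I F t x := by
  classical
  by_contra hbad0
  push Not at hbad0
  obtain ⟨v, hv⟩ := part1 hF hnt hmax
  -- a bad point beyond which no first is bad
  obtain ⟨x, hx, hbad, hlast⟩ : ∃ x, F x = x ∧ (∀ t, t ≤ s → ¬ Al ty I F t x) ∧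
      ∀ z j, x < z → F z = z → cnt F z = 2 ^ j - 1 → ∃ t, t ≤ s ∧ Al ty I F t z := by
    let T : Set ℕ := {z | F z = z ∧ (∃ j, cnt F z = 2 ^ j - 1) ∧ ∀ t, t ≤ s → ¬ Al ty I F t z}
    by_cases hT : T.Nonempty
    · have hTb : BddAbove T := ⟨v, by
        rintro z ⟨h1, ⟨j, h2⟩, h3⟩
        exact hv z j h1 h2 h3⟩
      obtain ⟨h1, h2, h3⟩ := Nat.sSup_mem hT hTb
      refine ⟨sSup T, h1, h3, fun z j hz h4 h5 => ?_⟩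
      by_contra hno
      push Not at hno
      have : z ≤ sSup T := le_csSup hTb ⟨h4, ⟨j, h5⟩, hno⟩
      omega
    · refine ⟨x, hx, hbad0, fun z j hz h4 h5 => ?_⟩
      by_contra hno
      push Not at hno
      exact hT ⟨z, h4, ⟨j, h5⟩, hno⟩
  have hex : ∃ t, Al ty I F t x := ⟨_, hF.al_self x⟩
  let i := Nat.find hex
  have hi : Al ty I F i x := Nat.find_spec hex
  have himin : ∀ t, t < i → ¬ Al ty I F t x := fun t ht => Nat.find_min hex ht
  have hsi : s < i := by
    by_contra hle
    exact hbad i (not_lt.1 hle) hi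
  have hit : i ≤ ty x := Nat.find_min' hex (hF.al_self _)
  let m := cnt F x
  have hpi : 0 < 2 ^ i := by positivity
  have him : 2 ^ i - 1 < m := by
    have h1 := sigma_pow_le (cnt F x)
    rw [← hF.sig _ hx] at h1
    have h2 : 2 ^ i ≤ 2 ^ ty x := Nat.pow_le_pow_right (by norm_num) hit
    have h3 : m ≠ 2 ^ i - 1 := by
      intro h
      have := hmax F hF hF.le_refl i x ⟨hx, h, himin⟩
      omega
    have : m = cnt F x := rfl
    omega
  have hum : nfx F m = x := nfx_cnt hx
  have hlow : ∀ k, k < m → nfx F k < x := fun k hk => by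
    rw [← hum]; exact hF.nfx_mono hk
  let κ : ℕ → ℕ := fun j => nfx F (shf (m + j))
  have hκ : StrictMono κ := fun a b hab => hF.nfx_mono (shf_mono (by omega))
  have hκx : ∀ j, x < κ j := by
    intro j
    rw [← hum]
    apply hF.nfx_mono
    have : 0 < 2 ^ Nat.log 2 (m + j + 1) := by positivity
    unfold shf
    omega
  have hch : ∀ z, x ≤ z → F z = z → ∃ w, (w ≤ z ∧ (w < x ∧ F w = w ∨ ∃ j, w = κ j) ∧
      Al ty I F (ty w) z) ∧ (∀ j, z = κ j → w = z) ∧ (z = x → w = nfx F (2 ^ i - 1)) := by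
    intro z hxz hz
    by_cases hzκ : ∃ j, z = κ j
    · refine ⟨z, ⟨le_rfl, Or.inr hzκ, hF.al_self z⟩, fun _ _ => rfl, fun h => ?_⟩
      obtain ⟨j, hj⟩ := hzκ
      have := hκx j
      omega
    by_cases hzx : z = x
    · refine ⟨nfx F (2 ^ i - 1), ⟨?_, Or.inl ⟨hlow _ him, hF.nfx_fix _⟩, ?_⟩,
        fun j hj => absurd ⟨j, hj⟩ hzκ, fun _ => rfl⟩
      · have := hlow _ him
        omega
      · rw [ty_nfx hF, sigma_pow, hzx]
        exact hi
    have hxz' : x < z := by omega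
    by_cases hfirst : ∃ j, cnt F z = 2 ^ j - 1
    · obtain ⟨j, hj⟩ := hfirst
      obtain ⟨t, ht, hA⟩ := hlast z j hxz' hz hj
      have h1 := pow_sub_lt (lt_of_le_of_lt ht hsi)
      have h2 := hlow (2 ^ t - 1) (by omega)
      refine ⟨nfx F (2 ^ t - 1), ⟨by omega, Or.inl ⟨h2, hF.nfx_fix _⟩, ?_⟩,
        fun j hj => absurd ⟨j, hj⟩ hzκ, fun h => absurd h hzx⟩
      rw [ty_nfx hF, sigma_pow]
      exact hA
    · obtain ⟨r, hr⟩ := sigma_exists (cnt F z)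
      have htz : sigmaSeq (cnt F z) = ty z := (hF.sig z hz).symm
      rw [htz] at hr
      have hr1 : 1 ≤ r := by
        by_contra h0
        apply hfirst
        refine ⟨ty z, ?_⟩
        have : r = 0 := by omega
        rw [this] at hr
        omega
      by_cases hnm : 2 ^ ty z - 1 < m
      · have h2 := hlow _ hnm
        refine ⟨nfx F (2 ^ ty z - 1), ⟨by omega, Or.inl ⟨h2, hF.nfx_fix _⟩, ?_⟩,
          fun j hj => absurd ⟨j, hj⟩ hzκ, fun h => absurd h hzx⟩
        rw [ty_nfx hF, sigma_pow]
        exact hF.al_self z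
      · obtain ⟨j, hj⟩ := Nat.exists_eq_add_of_le (not_lt.1 hnm)
        refine ⟨nfx F (shf (2 ^ ty z - 1)), ⟨?_, Or.inr ⟨j, by simp only [κ]; rw [hj]⟩, ?_⟩,
          fun j hj => absurd ⟨j, hj⟩ hzκ, fun h => absurd h hzx⟩
        · have h3 : nfx F (shf (2 ^ ty z - 1)) ≤ nfx F (cnt F z) := by
            apply hF.nfx_mono.monotone
            rw [shf_first]
            have : 2 ^ ty z * 3 ≤ 2 ^ ty z * (2 * r + 1) := Nat.mul_le_mul_left _ (by omega)
            omega
          rwa [nfx_cnt hz] at h3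
        · rw [ty_nfx hF, shf_sigma, sigma_pow]
          exact hF.al_self z
  choose! φ hφ hφκ hφx using hch
  obtain ⟨h1, h2, h3, h4⟩ := mkE_spec (φ := φ) (p0 := x) (κ := κ) hF hκ (hκx 0).le
    (fun j => hF.nfx_fix _) (fun j => by
      simp only [κ]
      rw [ty_nfx hF, shf_sigma]) (fun j => hφκ _ (hκx j).le (hF.nfx_fix _) j rfl) hφ
  have hb : nfx F (2 ^ i - 1) < x := hlow _ him
  have hxb : mkE F x φ x = nfx F (2 ^ i - 1) := by
    simp only [mkE]
    rw [hx, if_neg (lt_irrefl x)]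
    exact hφx x le_rfl hx rfl
  have := hmax _ h1 h2 i _ ⟨(h4 _).2 (Or.inl ⟨hb, hF.nfx_fix _⟩), by
    rw [cnt_congr (e' := F) (fun y hy => by rw [h3 y (by omega)])]
    exact hF.cnt_nfx _, fun t ht hA => himin t ht (h2.al' (by rw [hxb]; exact hA))⟩
  omega

/-- The dichotomy. -/
theorem reduce {E : ℕ → ℕ} (hE : Sp ty I E) :
    (∃ F, Sp ty I F ∧ Le F E ∧ ∀ F', Sp ty I F' → Le F' F → F' = F) ∨
    ∃ E0 q, Base ty I E0 q ∧ Le E0 E ∧ E0 q = q ∧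
      ∀ F, Sp ty I F → Le F E0 → ∀ F', Sp ty I F' → Le F' F → F' ∈ B ty I q F := by
  by_cases hnt : ∀ F, Sp ty I F → Le F E → ∃ F', Sp ty I F' ∧ Le F' F ∧ F' ≠ F
  · right
    obtain ⟨E1, s, q, h1, h2, h3, h4⟩ := claim1 hE hnt
    refine ⟨E1, q, ⟨h1, fun F hF hL x hx => ?_⟩, h2, h3.1, fun F hF hL F' hF' hL' => ?_⟩
    · obtain ⟨t, ht, hA⟩ := claim2 hF (hnt F hF (hL.trans h2))
        (fun G hG hGF => h4 G hG (hGF.trans hL)) x hx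
      have hq := (h3.persist h1 hF hL).1
      refine ⟨nfx F (2 ^ t - 1), ?_, hF.nfx_fix _, by rw [ty_nfx hF, sigma_pow]; exact hA⟩
      have h5 : nfx F (2 ^ t - 1) ≤ nfx F (cnt F q) := by
        apply hF.nfx_mono.monotone
        rw [hq.2.1]
        have : 2 ^ t ≤ 2 ^ s := Nat.pow_le_pow_right (by norm_num) ht
        omega
      rwa [nfx_cnt hq.1] at h5
    · obtain ⟨h5, h6⟩ := (h3.persist h1 hF hL).1.persist hF hF' hL'
      exact ⟨hF', hL', h6, h5.1⟩
  · left
    push Not at hnt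
    exact hnt

end PartG

section PartH
variable {ty : ℕ → ℕ} {I : ℕ → Set ℕ} {P : ℕ → Set ℕ}

/-- The function sending a point to the minimum of its class. -/
noncomputable def rep (E : Setoid ℕ) (x : ℕ) : ℕ := sInf {y | E.r x y}

theorem rep_rel (E : Setoid ℕ) (x : ℕ) : E.r x (rep E x) :=
  Nat.sInf_mem (s := {y | E.r x y}) ⟨x, E.refl' x⟩

theorem rep_le_of (E : Setoid ℕ) {x y : ℕ} (h : E.r x y) : rep E x ≤ y :=
  Nat.sInf_le (s := {y | E.r x y}) h

theorem rep_le (E : Setoid ℕ) (x : ℕ) : rep E x ≤ x := rep_le_of E (E.refl' x)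

theorem rep_eq_iff (E : Setoid ℕ) (x y : ℕ) : rep E x = rep E y ↔ E.r x y := by
  constructor
  · intro h
    have h1 := rep_rel E x
    rw [h] at h1
    exact E.trans' h1 (E.symm' (rep_rel E y))
  · intro h
    apply le_antisymm
    · exact rep_le_of E (E.trans' h (rep_rel E y))
    · exact rep_le_of E (E.trans' (E.symm' h) (rep_rel E x))

theorem rep_idem (E : Setoid ℕ) (x : ℕ) : rep E (rep E x) = rep E x :=
  (rep_eq_iff E _ _).2 (E.symm' (rep_rel E x))

theorem rep_fix_iff (E : Setoid ℕ) (x : ℕ) : rep E x = x ↔ x ∈ minReps E := by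
  constructor
  · intro h m hm
    rw [← h]
    exact rep_le_of E hm
  · intro h
    exact le_antisymm (rep_le E x) (h _ (rep_rel E x))

theorem pRep_eq (E : Setoid ℕ) (k : ℕ) : pRep E k = nfx (rep E) k := by
  have h : (fun y => y ∈ minReps E) = (fun y => rep E y = y) := by
    funext y
    exact propext (rep_fix_iff E y).symm
  unfold pRep nfx
  exact congrArg (fun p => Nat.nth p k) h

theorem rep_inj {E F : Setoid ℕ} (h : rep E = rep F) : E = F := by
  apply Setoid.ext
  intro a b
  have h1 := rep_eq_iff E a b
  have h2 := rep_eq_iff F a b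
  rw [h] at h1
  exact h1.symm.trans h2

theorem coarsens_iff (F E : Setoid ℕ) : Coarsens F E ↔ Le (rep F) (rep E) := by
  constructor
  · intro h x
    exact (rep_eq_iff F _ _).2 (h _ _ (E.symm' (rep_rel E x)))
  · intro h a b hab
    rw [← rep_eq_iff F, ← h a, ← h b, (rep_eq_iff E a b).2 hab]

theorem rep_ker {e : ℕ → ℕ} (he : Sp ty I e) : rep (Setoid.ker e) = e := by
  funext x
  apply le_antisymm
  · apply rep_le_of
    exact (he.idem x).symm
  · have h : e x = e (rep (Setoid.ker e) x) := rep_rel (Setoid.ker e) x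
    rw [h]
    exact he.le _

theorem classes_inf (E : Setoid ℕ) : (classes E).Infinite ↔ {y | rep E y = y}.Infinite := by
  have h : classes E = (fun x => {y | E.r x y}) '' {y | rep E y = y} := by
    ext C
    constructor
    · rintro ⟨x, rfl⟩
      refine ⟨rep E x, rep_idem E x, ?_⟩
      ext y
      exact ⟨fun h => E.trans' (rep_rel E x) h, fun h => E.trans' (E.symm' (rep_rel E x)) h⟩
    · rintro ⟨x, _, rfl⟩
      exact ⟨x, rfl⟩
  rw [h]
  apply Set.infinite_image_iff
  intro a ha b hb hab
  have h1 : b ∈ {y | E.r a y} := by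
    have h2 : {y | E.r a y} = {y | E.r b y} := hab
    rw [h2]
    exact E.refl' b
  have h3 := (rep_eq_iff E a b).2 h1
  have ha' : rep E a = a := ha
  have hb' : rep E b = b := hb
  rw [ha', hb'] at h3
  exact h3

theorem mem_iff (hty : ∀ x n, x ∈ P n ↔ ty x = n) (E : Setoid ℕ) :
    E ∈ EPaltI P I ↔ Sp ty I (rep E) := by
  constructor
  · rintro ⟨⟨h1, h2⟩, h3⟩
    refine ⟨rep_le E, rep_idem E, fun x => ?_, fun N => ?_, fun x hx => ?_⟩
    · obtain ⟨m, hm, hx⟩ := h3 (rep E x) ((rep_fix_iff E _).1 (rep_idem E x)) _ ((hty _ _).2 rfl) x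
        (E.symm' (rep_rel E x))
      rw [(hty _ _).1 hx]
      exact hm
    · rw [classes_inf, Set.infinite_iff_exists_gt] at h1
      obtain ⟨b, hb, hN⟩ := h1 N
      exact ⟨b, hN.le, hb⟩
    · have h := h2 (cnt (rep E) x)
      rw [pRep_eq, nfx_cnt hx] at h
      exact (hty _ _).1 h
  · intro h
    refine ⟨⟨(classes_inf E).2 h.set_inf, fun k => ?_⟩, fun x hx n hn y hy => ?_⟩
    · rw [pRep_eq, hty, h.sig _ (h.nfx_fix k), h.cnt_nfx]
    · refine ⟨ty y, ?_, (hty _ _).2 rfl⟩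
      have h1 := h.al y
      have h2 : rep E y = x := by
        rw [← (rep_eq_iff E x y).2 hy]
        exact (rep_fix_iff E x).2 hx
      rw [h2, (hty _ _).1 hn] at h1
      exact h1

open Classical in
/-- The member of the space with given representative function. -/
noncomputable def mkS (E : ↥(EPaltI P I)) (e : ℕ → ℕ) : ↥(EPaltI P I) :=
  if h : Setoid.ker e ∈ EPaltI P I then ⟨Setoid.ker e, h⟩ else E

theorem rep_mkS (hty : ∀ x n, x ∈ P n ↔ ty x = n) (E : ↥(EPaltI P I)) {e : ℕ → ℕ}
    (he : Sp ty I e) : rep (mkS E e).1 = e := by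
  have h : Setoid.ker e ∈ EPaltI P I := by
    rw [mem_iff hty, rep_ker he]
    exact he
  unfold mkS
  rw [dif_pos h]
  exact rep_ker he

theorem mkS_rep (hty : ∀ x n, x ∈ P n ↔ ty x = n) (E F : ↥(EPaltI P I)) :
    mkS E (rep F.1) = F :=
  Subtype.ext (rep_inj (rep_mkS hty E ((mem_iff hty _).1 F.2)))

theorem approx_congr {E F : Setoid ℕ} {n p : ℕ} (hE : Sp ty I (rep E)) (hF : Sp ty I (rep F))
    (hp : nfx (rep E) n ≤ p) (hEp : rep E p = p) (h : ∀ x, x < p → rep F x = rep E x)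
    (hFp : rep F p = p) : approx n F = approx n E := by
  have h1 : nfx (rep F) n = nfx (rep E) n := by
    set v := nfx (rep E) n with hv
    have hfix : rep F v = v := by
      rcases hp.lt_or_eq with h2 | h2
      · rw [h v h2]
        exact hE.nfx_fix n
      · rw [h2]
        exact hFp
    have hc : cnt (rep F) v = n := by
      rw [← hE.cnt_nfx n]
      apply cnt_congr
      intro y hy
      rw [h y (by omega)]
    rw [← hc]
    exact nfx_cnt hfix
  ext ⟨a, b⟩
  simp only [approx, Set.mem_setOf_eq, pRep_eq, h1]
  constructor
  · rintro ⟨ha, hb, hr⟩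
    refine ⟨ha, hb, ?_⟩
    rw [← rep_eq_iff] at hr ⊢
    rw [← h a (by omega), ← h b (by omega), hr]
  · rintro ⟨ha, hb, hr⟩
    refine ⟨ha, hb, ?_⟩
    rw [← rep_eq_iff] at hr ⊢
    rw [h a (by omega), h b (by omega), hr]

theorem open_transfer (hty : ∀ x n, x ∈ P n ↔ ty x = n) (E : ↥(EPaltI P I))
    {U : Set ↥(EPaltI P I)} (hU : (ellentuckTop (EPaltI P I)).IsOpen U) (E0 : ℕ → ℕ) :
    OpenL ty I E0 (mkS E ⁻¹' U) := by
  have hU' : TopologicalSpace.GenerateOpen {U | ∃ a E, U = basicSet (EPaltI P I) a E} U := hU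
  induction hU' with
  | basic s hs =>
    obtain ⟨a, E', rfl⟩ := hs
    rintro F ⟨hFc, n, hn⟩ hF hL
    refine ⟨nfx F n, fun p hp hFp G hG => ⟨?_, n, ?_⟩⟩
    · rw [coarsens_iff, rep_mkS hty E hF] at hFc
      rw [coarsens_iff, rep_mkS hty E hG.1]
      exact hG.2.1.trans hFc
    · rw [← hn]
      have r1 := rep_mkS hty E hF
      have r2 := rep_mkS hty E hG.1
      apply approx_congr (ty := ty) (I := I) (p := p)
      · rw [r1]; exact hF
      · rw [r2]; exact hG.1
      · rw [r1]; exact hp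
      · rw [r1]; exact hFp
      · rw [r1, r2]; exact hG.2.2.1
      · rw [r2]; exact hG.2.2.2
  | univ => exact fun F _ _ _ => ⟨0, fun p _ _ G _ => trivial⟩
  | inter s t hs ht ihs iht =>
    intro F hF hS hL
    obtain ⟨N1, h1⟩ := ihs hs F hF.1 hS hL
    obtain ⟨N2, h2⟩ := iht ht F hF.2 hS hL
    exact ⟨max N1 N2, fun p hp hFp G hG => ⟨h1 p (le_trans (le_max_left _ _) hp) hFp hG,
      h2 p (le_trans (le_max_right _ _) hp) hFp hG⟩⟩
  | sUnion S hS ih =>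
    rintro F ⟨s, hs, hF⟩ hSp hL
    obtain ⟨N, h⟩ := ih s hs (hS s hs) F hF hSp hL
    exact ⟨N, fun p hp hFp G hG => ⟨s, hs, h p hp hFp hG⟩⟩

theorem souslin_transfer (hty : ∀ x n, x ∈ P n ↔ ty x = n) (E : ↥(EPaltI P I))
    {E0 : ℕ → ℕ} {q : ℕ} (hb : Base ty I E0 q)
    {Y : Set ↥(EPaltI P I)} (hY : SouslinMeasurable (ellentuckTop (EPaltI P I)) Y) :
    CR ty I E0 q (mkS E ⁻¹' Y) := by
  apply hY {Y | CR ty I E0 q (mkS E ⁻¹' Y)}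
  · intro U hU
    exact (open_transfer hty E hU E0).cr hb
  · intro A hA
    exact CR.compl hA
  · intro A hA A' hA'
    exact CR.union hA hA'
  · intro f hf
    have h : mkS E ⁻¹' (souslinOp f) = souslinOp (fun s => mkS E ⁻¹' (f s)) := by
      simp only [souslinOp, Set.preimage_iUnion, Set.preimage_iInter]
    show CR ty I E0 q (mkS E ⁻¹' (souslinOp f))
    rw [h]
    exact CR.souslin hb hf

theorem finite_CR {E0 : ℕ → ℕ} {q : ℕ} (h0 : Good ty I E0 q E0 q) {κ : Type*} (s : Finset κ)
    (X : κ → Set (ℕ → ℕ)) (hX : ∀ i, CR ty I E0 q (X i)) :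
    ∃ G ∈ B ty I q E0, ∀ i ∈ s, B ty I q G ⊆ X i ∨ B ty I q G ⊆ (X i)ᶜ := by
  classical
  induction s using Finset.induction_on with
  | empty => exact ⟨E0, h0.sp.mem_B h0.fx, by simp⟩
  | insert a s _ ih =>
    obtain ⟨G, hG, h⟩ := ih
    obtain ⟨G', hG', h'⟩ := hX a G q (h0.of_B' hG)
    refine ⟨G', B_sub hG le_rfl hG', fun i hi => ?_⟩
    rcases Finset.mem_insert.1 hi with rfl | hi
    · exact h'
    · have hs := B_sub hG' le_rfl
      exact (h i hi).imp (fun k => hs.trans k) (fun k => hs.trans k)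

theorem main_aux
    (P : ℕ → Set ℕ)
    (hdisj : ∀ i j, i ≠ j → Disjoint (P i) (P j))
    (hcov : ⋃ i, P i = Set.univ)
    (I : ℕ → Set ℕ)
    (m : ℕ) (c : ↥(EPaltI P I) → Fin m)
    (hc : ∀ i : Fin m, SouslinMeasurable (ellentuckTop (EPaltI P I)) {E | c E = i})
    (E : ↥(EPaltI P I)) :
    ∃ F : ↥(EPaltI P I), Coarsens F.1 E.1 ∧
      ∀ F₁ F₂ : ↥(EPaltI P I), Coarsens F₁.1 F.1 → Coarsens F₂.1 F.1 → c F₁ = c F₂ := by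
  have hex : ∀ x, ∃ n, x ∈ P n := by
    intro x
    have hx : x ∈ ⋃ i, P i := by rw [hcov]; trivial
    exact Set.mem_iUnion.1 hx
  choose ty hty0 using hex
  have hty : ∀ x n, x ∈ P n ↔ ty x = n := by
    intro x n
    constructor
    · intro h
      by_contra hne
      exact Set.disjoint_left.1 (hdisj _ _ hne) (hty0 x) h
    · rintro rfl
      exact hty0 x
  have hSp : ∀ F : ↥(EPaltI P I), Sp ty I (rep F.1) := fun F => (mem_iff hty _).1 F.2
  rcases reduce (hSp E) with ⟨F, hF, hFE, hu⟩ | ⟨E0, q, hb, hL, hq, hr⟩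
  · refine ⟨mkS E F, ?_, fun F₁ F₂ h1 h2 => ?_⟩
    · rw [coarsens_iff, rep_mkS hty E hF]
      exact hFE
    · rw [coarsens_iff, rep_mkS hty E hF] at h1 h2
      have e1 := hu _ (hSp F₁) h1
      have e2 := hu _ (hSp F₂) h2
      rw [Subtype.ext (rep_inj (e1.trans e2.symm))]
  · obtain ⟨G, hG, h⟩ := finite_CR ⟨hb.sp, hb.sp.le_refl, le_rfl, hq⟩ Finset.univ
      (fun i : Fin m => mkS E ⁻¹' {E | c E = i}) (fun i => souslin_transfer hty E hb (hc i))
    refine ⟨mkS E G, ?_, fun F₁ F₂ h1 h2 => ?_⟩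
    · rw [coarsens_iff, rep_mkS hty E hG.1]
      exact hG.2.1.trans hL
    · rw [coarsens_iff, rep_mkS hty E hG.1] at h1 h2
      have m1 := hr G hG.1 hG.2.1 _ (hSp F₁) h1
      have m2 := hr G hG.1 hG.2.1 _ (hSp F₂) h2
      rcases h (c F₁) (Finset.mem_univ _) with hs | hs
      · have k := hs m2
        have k' : c (mkS E (rep F₂.1)) = c F₁ := k
        rw [mkS_rep hty] at k'
        exact k'.symm
      · have k := hs m1
        have k' : ¬ c (mkS E (rep F₁.1)) = c F₁ := k
        rw [mkS_rep hty] at k'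
        exact absurd rfl k'

end PartH

/-- **Corollary 5.4:** for every finite Souslin measurable colouring of `𝓔^{P,I}_∞`
and every `E` in the space, there is a coarsening `F ≤ E` in the space such that the
colouring is constant on `𝓔^{P,I}_∞ ↾ F`. -/
theorem EPaltISouslinColouring
    (P : ℕ → Set ℕ)
    (hinf : ∀ i, (P i).Infinite)
    (hdisj : ∀ i j, i ≠ j → Disjoint (P i) (P j))
    (hcov : ⋃ i, P i = Set.univ)
    (hmin : ∀ i j : ℕ, i < j → sInf (P i) < sInf (P j))
    (I : ℕ → Set ℕ) (hI : ∀ n, n ∈ I n)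
    (m : ℕ) (c : ↥(EPaltI P I) → Fin m)
    (hc : ∀ i : Fin m, SouslinMeasurable (ellentuckTop (EPaltI P I)) {E | c E = i})
    (E : ↥(EPaltI P I)) :
    ∃ F : ↥(EPaltI P I), Coarsens F.1 E.1 ∧
      ∀ F₁ F₂ : ↥(EPaltI P I), Coarsens F₁.1 F.1 → Coarsens F₂.1 F.1 → c F₁ = c F₂ := by
  exact main_aux P hdisj hcov I m c hc E

end DualRamsey
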